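/- arXiv:2505.03959 — 4 statements merged into one kernel-verified Lean document; each statement's English description precedes it below -/
import Mathlib

section
/- There exists a bipartite graph G = (A, B, E) such that bcevs(G) < bceovs(G, A); in fact there is such a graph with bcevs(G) = 2 and bceovs(G, A) = 3. -/
/- Common framework: bipartite graphs on vertex set `ℕ` with side labels,
   edge editions, vertex splittings, and the bicluster-editing numbers. -/

namespace BCE

/-- A graph on a finite subset of `ℕ` equipped with a labelling of its
vertices into two sides `A` and `B`. -/
structure BGraph where
  A : Set ℕ
  B : Set ℕ
  finA : A.Finite
  finB : B.Finite
  Adj : ℕ → ℕ → Prop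
  symm : ∀ u v, Adj u v → Adj v u

/-- The vertex set of a graph. -/
def verts (G : BGraph) : Set ℕ := G.A ∪ G.B

/-- The open neighbourhood of a vertex. -/
def nbhd (G : BGraph) (v : ℕ) : Set ℕ := {u | G.Adj v u}

/-- `G = (A, B, E)` is bipartite: the sides are disjoint and every edge joins
a vertex of `A` with a vertex of `B`. -/
def Bipartite (G : BGraph) : Prop :=
  Disjoint G.A G.B ∧
    ∀ u v, G.Adj u v → (u ∈ G.A ∧ v ∈ G.B) ∨ (u ∈ G.B ∧ v ∈ G.A)

/-- A (bipartite) graph is a disjoint union of bicliques iff whenever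
`a-b-c-d` is a walk, `a` and `d` are adjacent (equivalently, every connected
component is a complete bipartite graph). -/
def IsBicliqueUnion (G : BGraph) : Prop :=
  ∀ a b c d, G.Adj a b → G.Adj b c → G.Adj c d → G.Adj a d

/-- The editing operations: deletion of an edge, addition of an edge, and
splitting of a vertex `v` into `v` and a fresh vertex `v'` whose
neighbourhoods `N1`, `N2` cover the neighbourhood of `v`. -/
inductive Op where
  | del : ℕ → ℕ → Op
  | add : ℕ → ℕ → Op
  | split : ℕ → ℕ → Set ℕ → Set ℕ → Op

/-- `op` is a vertex splitting. -/
def IsSplitOp : Op → Prop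
  | Op.split _ _ _ _ => True
  | _ => False

/-- `OpStep sA sB op G G'` : performing the single operation `op` on `G`
yields `G'`; vertex splittings are allowed on side `A` (resp. `B`) only if
`sA` (resp. `sB`) is `true`.  A copy created by a splitting is put on the
same side as the split vertex. -/
inductive OpStep (sA sB : Bool) : Op → BGraph → BGraph → Prop where
  | del {G G' : BGraph} {u v : ℕ}
      (h : G.Adj u v) (hA : G'.A = G.A) (hB : G'.B = G.B)
      (hadj : ∀ x y, G'.Adj x y ↔
        (G.Adj x y ∧ ¬((x = u ∧ y = v) ∨ (x = v ∧ y = u)))) :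
      OpStep sA sB (Op.del u v) G G'
  | add {G G' : BGraph} {u v : ℕ}
      (hu : u ∈ G.A) (hv : v ∈ G.B) (h : ¬ G.Adj u v)
      (hA : G'.A = G.A) (hB : G'.B = G.B)
      (hadj : ∀ x y, G'.Adj x y ↔
        (G.Adj x y ∨ (x = u ∧ y = v) ∨ (x = v ∧ y = u))) :
      OpStep sA sB (Op.add u v) G G'
  | split {G G' : BGraph} {v v' : ℕ} {N1 N2 : Set ℕ}
      (hside : (v ∈ G.A ∧ sA = true) ∨ (v ∈ G.B ∧ sB = true))
      (hfresh : v' ∉ verts G)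
      (hcover : N1 ∪ N2 = nbhd G v)
      (hA : v ∈ G.A → G'.A = insert v' G.A ∧ G'.B = G.B)
      (hB : v ∈ G.B → G'.A = G.A ∧ G'.B = insert v' G.B)
      (hadj : ∀ x y, G'.Adj x y ↔
        ((G.Adj x y ∧ x ≠ v ∧ y ≠ v) ∨ (x = v ∧ y ∈ N1) ∨ (y = v ∧ x ∈ N1) ∨
          (x = v' ∧ y ∈ N2) ∨ (y = v' ∧ x ∈ N2))) :
      OpStep sA sB (Op.split v v' N1 N2) G G'

/-- `ApplySeq sA sB L G G'` : applying the sequence of operations `L`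
to `G` yields `G'`. -/
def ApplySeq (sA sB : Bool) : List Op → BGraph → BGraph → Prop
  | [], G, G' => G' = G
  | op :: L, G, G'' => ∃ G', OpStep sA sB op G G' ∧ ApplySeq sA sB L G' G''

/-- The sequence `L` transforms `G` into a disjoint union of bicliques. -/
def Solves (sA sB : Bool) (L : List Op) (G : BGraph) : Prop :=
  ∃ G', ApplySeq sA sB L G G' ∧ IsBicliqueUnion G'

/-- `bcevs G` : the minimum length of a sequence of edge editions and vertex
splittings transforming `G` into a disjoint union of bicliques. -/
noncomputable def bcevs (G : BGraph) : ℕ :=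
  sInf {n | ∃ L, L.length = n ∧ Solves true true L G}

/-- `bceovs G` (that is, `bceovs(G, A)`) : the minimum length of such a
sequence in which vertex splittings are applied only to vertices of the side
`A` (and their copies, which are also on side `A`). -/
noncomputable def bceovs (G : BGraph) : ℕ :=
  sInf {n | ∃ L, L.length = n ∧ Solves true false L G}

/-- The subgraph of `G` induced by `S`. -/
def induce (G : BGraph) (S : Set ℕ) : BGraph where
  A := G.A ∩ S
  B := G.B ∩ S
  finA := G.finA.subset Set.inter_subset_left
  finB := G.finB.subset Set.inter_subset_left
  Adj := fun u v => G.Adj u v ∧ u ∈ S ∧ v ∈ S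
  symm := fun u v h => ⟨G.symm u v h.1, h.2.2, h.2.1⟩

/-- `G` is a tree (as an abstract graph on its vertex set). -/
def IsTreeB (G : BGraph) : Prop :=
  (SimpleGraph.induce (verts G) (SimpleGraph.fromRel G.Adj)).IsTree

/-- `G` is connected. -/
def ConnectedB (G : BGraph) : Prop :=
  (SimpleGraph.induce (verts G) (SimpleGraph.fromRel G.Adj)).Connected

/-- The set `S` induces a biclique in `G`: every vertex of `S` on side `A` is
adjacent to every vertex of `S` on side `B`. -/
def IsBicliqueOn (G : BGraph) (S : Set ℕ) : Prop :=
  ∀ u ∈ S ∩ G.A, ∀ v ∈ S ∩ G.B, G.Adj u v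

/-- The set `S` induces a star in `G`: some centre `c ∈ S` is adjacent to all
other vertices of `S`, and every edge inside `S` uses the centre. -/
def IsStarOn (G : BGraph) (S : Set ℕ) : Prop :=
  ∃ c ∈ S, (∀ v ∈ S, v ≠ c → G.Adj c v) ∧
    (∀ u ∈ S, ∀ v ∈ S, G.Adj u v → u = c ∨ v = c)

/-- An `A`-partitioning cover of `G`: a collection of subsets of `A ∪ B`
covering all vertices whose traces on `A` form a partition of `A` (every
vertex of `A` lies in a unique member of the collection). -/
def IsAPartCover (G : BGraph) (C : Set (Set ℕ)) : Prop :=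
  (∀ X ∈ C, X ⊆ verts G) ∧
  (∀ v ∈ verts G, ∃ X ∈ C, v ∈ X) ∧
  (∀ a ∈ G.A, ∃! X, X ∈ C ∧ a ∈ X)

/-- The cost of an `A`-partitioning cover: each `a ∈ A` lying in the unique
set `X ∈ C` costs `|(B ∩ X) \ N(a)| + |N(a) \ X|`; each `b ∈ B` lying in `j`
members of `C` costs `j - 1`. -/
noncomputable def coverCost (G : BGraph) (C : Set (Set ℕ)) : ℕ :=
  (∑ᶠ a ∈ G.A, ∑ᶠ X ∈ {X ∈ C | a ∈ X},
      (((G.B ∩ X) \ nbhd G a).ncard + ((nbhd G a) \ X).ncard)) +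
  ∑ᶠ b ∈ G.B, ({X ∈ C | b ∈ X}.ncard - 1)

/-- The twin class of a vertex: all vertices of `G` with the same open
neighbourhood. -/
def twinClass (G : BGraph) (v : ℕ) : Set ℕ :=
  {u ∈ verts G | nbhd G u = nbhd G v}

/-- The twin classes of `G`. -/
def twinClasses (G : BGraph) : Set (Set ℕ) :=
  {T | ∃ v ∈ verts G, T = twinClass G v}

/-- A cover is twin-adapted if every member contains each twin class either
entirely or not at all. -/
def TwinAdapted (G : BGraph) (C : Set (Set ℕ)) : Prop :=
  ∀ T ∈ twinClasses G, ∀ X ∈ C, T ∩ X = ∅ ∨ T ⊆ X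

/-- `G` is a cycle with consecutive vertices `p 0, p 1, …, p (m-1)`
(indices modulo `m`), the vertices of even index forming side `A`. -/
def IsCycleWith (G : BGraph) (p : ℕ → ℕ) (m : ℕ) : Prop :=
  (∀ i j, i < m → j < m → p i = p j → i = j) ∧
  G.A = p '' {i | i < m ∧ i % 2 = 0} ∧
  G.B = p '' {i | i < m ∧ i % 2 = 1} ∧
  (∀ x y, G.Adj x y ↔ ∃ i < m,
    (x = p i ∧ y = p ((i + 1) % m)) ∨ (y = p i ∧ x = p ((i + 1) % m)))

/-- `G` is a path with `l` edges and consecutive vertices `p 0, …, p l`,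
the vertices of even index forming side `A`. -/
def IsPathWith (G : BGraph) (p : ℕ → ℕ) (l : ℕ) : Prop :=
  (∀ i j, i ≤ l → j ≤ l → p i = p j → i = j) ∧
  G.A = p '' {i | i ≤ l ∧ i % 2 = 0} ∧
  G.B = p '' {i | i ≤ l ∧ i % 2 = 1} ∧
  (∀ x y, G.Adj x y ↔ ∃ i < l,
    (x = p i ∧ y = p (i + 1)) ∨ (y = p i ∧ x = p (i + 1)))

end BCE

namespace BCE

/-- The vertex `w` belongs to the path `x - b - y - d`, where the vertices `b`, `d` of side `B`
count only if `sB` is `true`. -/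
def Touches (sB : Bool) (x b y d w : ℕ) : Prop :=
  w = x ∨ w = y ∨ (sB = true ∧ (w = b ∨ w = d))

/-- The paths `x i - b i - y i - d i`, for `i ∈ S`, are induced in `G`, start on side `A`, and are
pairwise disjoint on side `A` (and also on side `B` if `sB` is `true`). -/
structure IsPathPacking {ι : Type*} (sB : Bool) (G : BGraph) (x b y d : ι → ℕ)
    (S : Finset ι) : Prop where
  disjoint_sides : Disjoint G.A G.B
  x_mem : ∀ i ∈ S, x i ∈ G.A
  y_mem : ∀ i ∈ S, y i ∈ G.A
  b_mem : ∀ i ∈ S, b i ∈ G.B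
  d_mem : ∀ i ∈ S, d i ∈ G.B
  adj_xb : ∀ i ∈ S, G.Adj (x i) (b i)
  adj_yb : ∀ i ∈ S, G.Adj (y i) (b i)
  adj_yd : ∀ i ∈ S, G.Adj (y i) (d i)
  not_adj_xd : ∀ i ∈ S, ¬ G.Adj (x i) (d i)
  eq_of_touches : ∀ i ∈ S, ∀ j ∈ S, ∀ w, Touches sB (x i) (b i) (y i) (d i) w →
    Touches sB (x j) (b j) (y j) (d j) w → i = j

/-- A single operation keeps the sides disjoint and all vertices on their sides, and it only
affects adjacencies at one vertex, which lies on side `A` unless splittings on side `B` are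
allowed. -/
theorem OpStep.exists_adj_iff {sA sB : Bool} {op : Op} {G G' : BGraph}
    (h : OpStep sA sB op G G') (hG : Disjoint G.A G.B) :
    Disjoint G'.A G'.B ∧ G.A ⊆ G'.A ∧ G.B ⊆ G'.B ∧
      ∃ w, ∀ p ∈ G.A, ∀ q ∈ G.B, p ≠ w → (sB = true → q ≠ w) → (G'.Adj p q ↔ G.Adj p q) := by
  have hne : ∀ p ∈ G.A, ∀ q ∈ G.B, p ≠ q := fun p hp q hq => hG.ne_of_mem hp hq
  cases h with
  | @del _ _ u v h hA hB hadj =>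
    refine ⟨by rwa [hA, hB], hA.ge, hB.ge, ?_⟩
    by_cases hu : u ∈ G.A
    · exact ⟨u, fun p hp q hq h1 _ => by have := hne u hu q hq; grind⟩
    · exact ⟨v, fun p hp q hq h1 _ => by grind⟩
  | @add _ _ u v hu hv h hA hB hadj =>
    refine ⟨by rwa [hA, hB], hA.ge, hB.ge, u, fun p hp q hq h1 _ => ?_⟩
    have := hne u hu q hq
    grind
  | @split _ _ v v' N1 N2 hside hfresh hcover hA hB hadj =>
    have hv'A : v' ∉ G.A := fun h => hfresh (Or.inl h)
    have hv'B : v' ∉ G.B := fun h => hfresh (Or.inr h)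
    have hw : ∃ w, ∀ p ∈ G.A, ∀ q ∈ G.B, p ≠ w → (sB = true → q ≠ w) →
        (G'.Adj p q ↔ G.Adj p q) := by
      refine ⟨v, fun p hp q hq h1 h2 => ?_⟩
      have hqv : q ≠ v := by
        rcases hside with ⟨hv, _⟩ | ⟨_, hs⟩
        · exact (hne v hv q hq).symm
        · exact h2 hs
      have : p ≠ v' := fun h => hv'A (h ▸ hp)
      have : q ≠ v' := fun h => hv'B (h ▸ hq)
      grind
    rcases hside with ⟨hv, _⟩ | ⟨hv, _⟩
    · obtain ⟨h1, h2⟩ := hA hv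
      rw [h1, h2]
      exact ⟨Set.disjoint_insert_left.2 ⟨hv'B, hG⟩, Set.subset_insert _ _, subset_rfl, hw⟩
    · obtain ⟨h1, h2⟩ := hB hv
      rw [h1, h2]
      exact ⟨Set.disjoint_insert_right.2 ⟨hv'A, hG⟩, subset_rfl, Set.subset_insert _ _, hw⟩

/-- A single operation destroys at most one path of a packing. -/
theorem IsPathPacking.exists_erase {ι : Type*} [DecidableEq ι] {sA sB : Bool} {op : Op}
    {G G' : BGraph} {x b y d : ι → ℕ} {S : Finset ι} (hP : IsPathPacking sB G x b y d S)
    (hS : S.Nonempty) (h : OpStep sA sB op G G') :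
    ∃ i, IsPathPacking sB G' x b y d (S.erase i) := by
  obtain ⟨hdis, hA, hB, w, hw⟩ := h.exists_adj_iff hP.disjoint_sides
  obtain ⟨i, hi⟩ : ∃ i, ∀ j ∈ S.erase i, j ∈ S ∧ ¬ Touches sB (x j) (b j) (y j) (d j) w := by
    by_cases hex : ∃ i ∈ S, Touches sB (x i) (b i) (y i) (d i) w
    · obtain ⟨i, hiS, hi⟩ := hex
      refine ⟨i, fun j hj => ⟨Finset.mem_of_mem_erase hj, fun hj' => ?_⟩⟩
      exact Finset.ne_of_mem_erase hj
        (hP.eq_of_touches j (Finset.mem_of_mem_erase hj) i hiS w hj' hi)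
    · obtain ⟨i, _⟩ := hS
      exact ⟨i, fun j hj => ⟨Finset.mem_of_mem_erase hj,
        fun hj' => hex ⟨j, Finset.mem_of_mem_erase hj, hj'⟩⟩⟩
  have key : ∀ j ∈ S.erase i, (G'.Adj (x j) (b j) ↔ G.Adj (x j) (b j)) ∧
      (G'.Adj (y j) (b j) ↔ G.Adj (y j) (b j)) ∧ (G'.Adj (y j) (d j) ↔ G.Adj (y j) (d j)) ∧
      (G'.Adj (x j) (d j) ↔ G.Adj (x j) (d j)) := by
    intro j hj
    obtain ⟨hjS, ht⟩ := hi j hj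
    have hx := hP.x_mem j hjS
    have hy := hP.y_mem j hjS
    have hb := hP.b_mem j hjS
    have hd := hP.d_mem j hjS
    unfold Touches at ht
    refine ⟨hw _ hx _ hb ?_ ?_, hw _ hy _ hb ?_ ?_, hw _ hy _ hd ?_ ?_, hw _ hx _ hd ?_ ?_⟩ <;>
      grind
  exact ⟨i, hdis, fun j hj => hA (hP.x_mem j (hi j hj).1), fun j hj => hA (hP.y_mem j (hi j hj).1),
    fun j hj => hB (hP.b_mem j (hi j hj).1), fun j hj => hB (hP.d_mem j (hi j hj).1),
    fun j hj => (key j hj).1.2 (hP.adj_xb j (hi j hj).1),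
    fun j hj => (key j hj).2.1.2 (hP.adj_yb j (hi j hj).1),
    fun j hj => (key j hj).2.2.1.2 (hP.adj_yd j (hi j hj).1),
    fun j hj h => hP.not_adj_xd j (hi j hj).1 ((key j hj).2.2.2.1 h),
    fun j hj k hk => hP.eq_of_touches j (hi j hj).1 k (hi k hk).1⟩

/-- The size of a path packing is a lower bound for the length of a solution. -/
theorem IsPathPacking.card_le_length {ι : Type*} {sA sB : Bool} {x b y d : ι → ℕ} {L : List Op} :
    ∀ {G : BGraph} {S : Finset ι}, IsPathPacking sB G x b y d S → Solves sA sB L G →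
      S.card ≤ L.length := by
  classical
  induction L with
  | nil =>
    rintro G S hP ⟨G', rfl, hG⟩
    by_contra! hc
    obtain ⟨i, hi⟩ := Finset.card_pos.1 hc
    exact hP.not_adj_xd i hi (hG _ _ _ _ (hP.adj_xb i hi) (G'.symm _ _ (hP.adj_yb i hi))
      (hP.adj_yd i hi))
  | cons op L ih =>
    rintro G S hP ⟨G'', ⟨G', hstep, hL⟩, hG⟩
    rcases S.eq_empty_or_nonempty with rfl | hS
    · simp
    obtain ⟨i, hi⟩ := hP.exists_erase hS hstep
    have h1 := ih hi ⟨G'', hL, hG⟩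
    have h2 := Finset.pred_card_le_card_erase (s := S) (a := i)
    simp only [List.length_cons]
    omega

/-- The graph with sides `A`, `B` and edges `E`. -/
def ofEdges (A B : Finset ℕ) (E : Finset (ℕ × ℕ)) : BGraph where
  A := A
  B := B
  finA := A.finite_toSet
  finB := B.finite_toSet
  Adj u v := (u, v) ∈ E ∨ (v, u) ∈ E
  symm _ _ h := h.symm

theorem opStep_del_ofEdges (sA sB : Bool) {A B : Finset ℕ} {E : Finset (ℕ × ℕ)} {u v : ℕ}
    (h : (u, v) ∈ E) (h' : (v, u) ∉ E) :
    OpStep sA sB (Op.del u v) (ofEdges A B E) (ofEdges A B (E.erase (u, v))) := by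
  refine .del (Or.inl h) rfl rfl fun x y => ?_
  simp only [ofEdges, Finset.mem_erase, ne_eq, Prod.mk.injEq]
  grind

theorem isBicliqueUnion_ofEdges {A B : Finset ℕ} {E : Finset (ℕ × ℕ)}
    (hE : ∀ p ∈ E, ∀ q ∈ E, p.1 ≠ q.2)
    (h : ∀ p ∈ E, ∀ q ∈ E, ∀ r ∈ E, p.2 = q.2 → q.1 = r.1 → (p.1, r.2) ∈ E) :
    IsBicliqueUnion (ofEdges A B E) := by
  intro a b c d hab hbc hcd
  simp only [ofEdges] at *
  rcases hab with hab | hab <;> rcases hbc with hbc | hbc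
  · exact absurd rfl (hE _ hbc _ hab)
  · rcases hcd with hcd | hcd
    · exact Or.inl (h _ hab _ hbc _ hcd rfl rfl)
    · exact absurd rfl (hE _ hbc _ hcd)
  · rcases hcd with hcd | hcd
    · exact absurd rfl (hE _ hcd _ hbc)
    · exact Or.inr (h _ hcd _ hbc _ hab rfl rfl)
  · exact absurd rfl (hE _ hab _ hbc)

/-- The edges of the disjoint union of `K_{1,2}` and `K_{2,2}` glued at a vertex of side `B`, and
a path on four vertices. -/
def gluedEdges : Finset (ℕ × ℕ) :=
  {(0, 6), (1, 6), (2, 6), (3, 6), (2, 7), (3, 7), (4, 8), (5, 8), (5, 9)}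

/-- The edges obtained from `gluedEdges` by splitting the vertex `6`. -/
def unglued : Finset (ℕ × ℕ) :=
  {(0, 6), (1, 6), (2, 10), (3, 10), (2, 7), (3, 7), (4, 8), (5, 8), (5, 9)}

/-- The graph with edges `gluedEdges`. -/
def glued : BGraph := ofEdges {0, 1, 2, 3, 4, 5} {6, 7, 8, 9} gluedEdges

theorem isPathPacking_glued (sB : Bool) (S : Finset (Fin 3)) (hS : sB = true → S = {0, 2}) :
    IsPathPacking sB glued ![0, 1, 4] ![6, 6, 8] ![2, 3, 5] ![7, 7, 9] S where
  disjoint_sides := Finset.disjoint_coe.2 (by decide)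
  x_mem i _ := by fin_cases i <;> simp [glued, ofEdges]
  y_mem i _ := by fin_cases i <;> simp [glued, ofEdges]
  b_mem i _ := by fin_cases i <;> simp [glued, ofEdges]
  d_mem i _ := by fin_cases i <;> simp [glued, ofEdges]
  adj_xb i _ := by fin_cases i <;> simp [glued, ofEdges, gluedEdges]
  adj_yb i _ := by fin_cases i <;> simp [glued, ofEdges, gluedEdges]
  adj_yd i _ := by fin_cases i <;> simp [glued, ofEdges, gluedEdges]
  not_adj_xd i _ := by fin_cases i <;> simp [glued, ofEdges, gluedEdges]
  eq_of_touches i hi j hj w h1 h2 := by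
    cases sB
    · fin_cases i <;> fin_cases j <;> simp [Touches] at h1 h2 ⊢ <;> omega
    · rw [hS rfl] at hi hj
      fin_cases i <;> fin_cases j <;> simp [Touches] at hi hj h1 h2 ⊢ <;> omega

theorem opStep_split_glued :
    OpStep true true (Op.split 6 10 {0, 1} {2, 3}) glued
      (ofEdges {0, 1, 2, 3, 4, 5} {10, 6, 7, 8, 9} unglued) := by
  refine .split (Or.inr ⟨by simp [glued, ofEdges], rfl⟩) (by simp [verts, glued, ofEdges]) ?_
    (fun h => ?_) (fun _ => ⟨rfl, ?_⟩) fun x y => ?_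
  · ext z
    simp [nbhd, glued, ofEdges, gluedEdges]
    omega
  · simp [glued, ofEdges] at h
  · simp [glued, ofEdges]
  · simp only [glued, ofEdges, gluedEdges, unglued, Finset.mem_insert, Finset.mem_singleton,
      Prod.mk.injEq, Set.mem_insert_iff, Set.mem_singleton_iff]
    rcases le_or_gt x 10 with hx | hx
    · interval_cases x <;> simp <;> omega
    · obtain ⟨k, rfl⟩ := Nat.exists_eq_add_of_le' (Nat.succ_le_of_lt hx)
      simp

theorem solves_glued :
    Solves true true [Op.split 6 10 {0, 1} {2, 3}, Op.del 5 8] glued :=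
  ⟨_, ⟨_, opStep_split_glued, _, opStep_del_ofEdges _ _ (by decide) (by decide), rfl⟩,
    isBicliqueUnion_ofEdges (by decide) (by decide)⟩

theorem solves_glued_of_splits_on_left :
    Solves true false [Op.del 2 6, Op.del 3 6, Op.del 5 8] glued :=
  ⟨_, ⟨_, opStep_del_ofEdges _ _ (by decide) (by decide),
      _, opStep_del_ofEdges _ _ (by decide) (by decide),
      _, opStep_del_ofEdges _ _ (by decide) (by decide), rfl⟩,
    isBicliqueUnion_ofEdges (by decide) (by decide)⟩

theorem bcevs_glued : bcevs glued = 2 := by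
  refine IsLeast.csInf_eq ⟨⟨_, rfl, solves_glued⟩, ?_⟩
  rintro n ⟨L, rfl, hL⟩
  exact (isPathPacking_glued true {0, 2} fun _ => rfl).card_le_length hL

theorem bceovs_glued : bceovs glued = 3 := by
  refine IsLeast.csInf_eq ⟨⟨_, rfl, solves_glued_of_splits_on_left⟩, ?_⟩
  rintro n ⟨L, rfl, hL⟩
  exact (isPathPacking_glued false Finset.univ nofun).card_le_length hL

/-- There exists a bipartite graph `G = (A, B, E)` with
`bcevs(G) < bceovs(G, A)`; in fact one with `bcevs(G) = 2` and
`bceovs(G, A) = 3`. -/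
theorem exists_bcevs_lt_bceovs :
    ∃ G : BGraph, Bipartite G ∧ bcevs G = 2 ∧ bceovs G = 3 := by
  refine ⟨glued, ⟨Finset.disjoint_coe.2 (by decide), fun u v h => ?_⟩, bcevs_glued, bceovs_glued⟩
  simp [glued, ofEdges, gluedEdges] at h ⊢
  omega

end BCE
end

section
/- For every integer k ≥ 2, every sequence of edge editions and vertex splittings that transforms the cycle C_{6k} on 6k vertices into a disjoint union of bicliques has length at least 2k. -/
namespace BCE

/-- Every edge of `G` has its ends among the vertices of `G`. -/
def Supported (G : BGraph) : Prop := ∀ x y, G.Adj x y → x ∈ verts G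

/-- The cycle `0, 1, …, 3n - 1` decomposes into `n` paths with three edges; the `i`-th one starts
at `3i` and ends at `pathEnd n i`. -/
def pathEnd (n i : ℕ) : ℕ := if i + 1 = n then 0 else 3 * i + 3

/-- Relative to a labelling `f` of the vertices by positions on the cycle of length `3n`, the graph
`G` contains a copy of the `i`-th path, and no edge joins copies of the two ends of that path. -/
def Live (G : BGraph) (f : ℕ → ℕ) (n i : ℕ) : Prop :=
  (∃ x y z w, f x = 3 * i ∧ f y = 3 * i + 1 ∧ f z = 3 * i + 2 ∧ f w = pathEnd n i ∧
    G.Adj x y ∧ G.Adj y z ∧ G.Adj z w) ∧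
  ∀ x w, f x = 3 * i → f w = pathEnd n i → ¬ G.Adj x w

lemma pathEnd_mod (n i : ℕ) : pathEnd n i % 3 = 0 := by
  unfold pathEnd; split_ifs <;> omega

lemma pathEnd_ne {n i : ℕ} (hn : 2 ≤ n) : pathEnd n i ≠ 3 * i := by
  unfold pathEnd; split_ifs <;> omega

/-- A path is determined by its unordered pair of ends. -/
lemma eq_of_ends_eq {n i j s t : ℕ} (hn : 3 ≤ n) (hi : i < n) (hj : j < n)
    (h : (s = 3 * i ∧ t = pathEnd n i) ∨ (t = 3 * i ∧ s = pathEnd n i))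
    (h' : (s = 3 * j ∧ t = pathEnd n j) ∨ (t = 3 * j ∧ s = pathEnd n j)) : i = j := by
  unfold pathEnd at h h'; split_ifs at h h' <;> omega

lemma Live.not_isBicliqueUnion {G : BGraph} {f : ℕ → ℕ} {n i : ℕ} (h : Live G f n i) :
    ¬ IsBicliqueUnion G := by
  obtain ⟨⟨x, y, z, w, hx, -, -, hw, h₁, h₂, h₃⟩, h⟩ := h
  exact fun hG => h x w hx hw (hG x y z w h₁ h₂ h₃)

lemma supported_of_split {G G' : BGraph} {v v' : ℕ} {N₁ N₂ : Set ℕ} (hG : Supported G)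
    (hside : v ∈ verts G) (hcover : N₁ ∪ N₂ = nbhd G v)
    (hverts : verts G' = insert v' (verts G))
    (hadj : ∀ x y, G'.Adj x y ↔
      ((G.Adj x y ∧ x ≠ v ∧ y ≠ v) ∨ (x = v ∧ y ∈ N₁) ∨ (y = v ∧ x ∈ N₁) ∨
        (x = v' ∧ y ∈ N₂) ∨ (y = v' ∧ x ∈ N₂))) : Supported G' := by
  have hN : ∀ x, x ∈ N₁ ∨ x ∈ N₂ → x ∈ verts G := fun x hx =>
    hG x v (G.symm _ _ (hcover.subset hx))
  intro x y hxy
  rw [hverts]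
  rcases (hadj x y).1 hxy with h | h | h | h | h
  · exact Or.inr (hG x y h.1)
  · exact Or.inr (h.1 ▸ hside)
  · exact Or.inr (hN x (Or.inl h.2))
  · exact Or.inl h.1
  · exact Or.inr (hN x (Or.inr h.2))

lemma Live.split {G G' : BGraph} {f : ℕ → ℕ} {n i v v' : ℕ} {N₁ N₂ : Set ℕ} (hn : 2 ≤ n)
    (hG : Supported G) (hfresh : v' ∉ verts G) (hcover : N₁ ∪ N₂ = nbhd G v)
    (hadj : ∀ x y, G'.Adj x y ↔
      ((G.Adj x y ∧ x ≠ v ∧ y ≠ v) ∨ (x = v ∧ y ∈ N₁) ∨ (y = v ∧ x ∈ N₁) ∨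
        (x = v' ∧ y ∈ N₂) ∨ (y = v' ∧ x ∈ N₂)))
    (hi : i ≠ f v / 3) (h : Live G f n i) :
    Live G' (Function.update f v' (f v)) n i := by
  have hN : ∀ {x}, x ∈ N₁ ∨ x ∈ N₂ ↔ G.Adj v x := fun {x} => Set.ext_iff.1 hcover x
  have hne : ∀ {x y}, G.Adj x y → x ≠ v' := fun hxy h => hfresh (h ▸ hG _ _ hxy)
  have hmod := pathEnd_mod n i
  have hends := pathEnd_ne (i := i) hn
  obtain ⟨⟨x, y, z, w, hx, hy, hz, hw, h₁, h₂, h₃⟩, h⟩ := h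
  have hyv : y ≠ v := by rintro rfl; omega
  have hzv : z ≠ v := by rintro rfl; omega
  -- every neighbour `b ≠ v` of `a` stays adjacent to some copy of `a`
  have lift : ∀ a b, G.Adj a b → b ≠ v →
      ∃ a', Function.update f v' (f v) a' = f a ∧ G'.Adj a' b := by
    intro a b hab hb
    by_cases ha : a = v
    · subst ha
      rcases hN.2 hab with hb₁ | hb₂
      · exact ⟨a, Function.update_of_ne (hne hab) _ _, by rw [hadj]; tauto⟩
      · exact ⟨v', by simp, by rw [hadj]; tauto⟩
    · exact ⟨a, Function.update_of_ne (hne hab) _ _, by rw [hadj]; tauto⟩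
  -- conversely, every new edge comes from an old one
  have proj : ∀ a b, G'.Adj a b → ∃ a' b', G.Adj a' b' ∧
      Function.update f v' (f v) a = f a' ∧ Function.update f v' (f v) b = f b' := by
    intro a b hab
    rcases (hadj a b).1 hab with h | ⟨rfl, h⟩ | ⟨rfl, h⟩ | ⟨rfl, h⟩ | ⟨rfl, h⟩
    · exact ⟨a, b, h.1, Function.update_of_ne (hne h.1) _ _,
        Function.update_of_ne (hne (G.symm _ _ h.1)) _ _⟩
    · have h := hN.1 (Or.inl h)
      exact ⟨a, b, h, Function.update_of_ne (hne h) _ _,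
        Function.update_of_ne (hne (G.symm _ _ h)) _ _⟩
    · have h := G.symm _ _ (hN.1 (Or.inl h))
      exact ⟨a, b, h, Function.update_of_ne (hne h) _ _,
        Function.update_of_ne (hne (G.symm _ _ h)) _ _⟩
    · have h := hN.1 (Or.inr h)
      exact ⟨v, b, h, by simp, Function.update_of_ne (hne (G.symm _ _ h)) _ _⟩
    · have h := G.symm _ _ (hN.1 (Or.inr h))
      exact ⟨a, v, h, Function.update_of_ne (hne h) _ _, by simp⟩
  refine ⟨?_, ?_⟩
  · obtain ⟨x', hx', hxy⟩ := lift x y h₁ hyv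
    obtain ⟨w', hw', hwz⟩ := lift w z (G.symm _ _ h₃) hzv
    refine ⟨x', y, z, w', hx'.trans hx, ?_, ?_, hw'.trans hw, hxy, ?_, G'.symm _ _ hwz⟩
    · rw [Function.update_of_ne (hne h₂), hy]
    · rw [Function.update_of_ne (hne h₃), hz]
    · exact (hadj y z).2 (Or.inl ⟨h₂, hyv, hzv⟩)
  · intro a b ha hb hab
    obtain ⟨a', b', hab', ha', hb'⟩ := proj a b hab
    exact h a' b' (ha' ▸ ha) (hb' ▸ hb) hab'

lemma Live.del {G G' : BGraph} {f : ℕ → ℕ} {n i u v : ℕ}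
    (hadj : ∀ x y, G'.Adj x y ↔ (G.Adj x y ∧ ¬((x = u ∧ y = v) ∨ (x = v ∧ y = u))))
    (hi : i ≠ if f u % 3 = 0 then f v / 3 else f u / 3) (h : Live G f n i) : Live G' f n i := by
  have hmod := pathEnd_mod n i
  obtain ⟨⟨x, y, z, w, hx, hy, hz, hw, h₁, h₂, h₃⟩, h⟩ := h
  refine ⟨⟨x, y, z, w, hx, hy, hz, hw, ?_, ?_, ?_⟩,
    fun a b ha hb hab => h a b ha hb ((hadj a b).1 hab).1⟩
  · refine (hadj _ _).2 ⟨h₁, ?_⟩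
    rintro (⟨rfl, rfl⟩ | ⟨rfl, rfl⟩) <;> split_ifs at hi <;> omega
  · refine (hadj _ _).2 ⟨h₂, ?_⟩
    rintro (⟨rfl, rfl⟩ | ⟨rfl, rfl⟩) <;> split_ifs at hi <;> omega
  · refine (hadj _ _).2 ⟨h₃, ?_⟩
    rintro (⟨rfl, rfl⟩ | ⟨rfl, rfl⟩) <;> split_ifs at hi <;> omega

lemma Live.add {G G' : BGraph} {f : ℕ → ℕ} {n i u v : ℕ}
    (hadj : ∀ x y, G'.Adj x y ↔ (G.Adj x y ∨ (x = u ∧ y = v) ∨ (x = v ∧ y = u)))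
    (hi : ¬ ((f u = 3 * i ∧ f v = pathEnd n i) ∨ (f v = 3 * i ∧ f u = pathEnd n i)))
    (h : Live G f n i) : Live G' f n i := by
  obtain ⟨⟨x, y, z, w, hx, hy, hz, hw, h₁, h₂, h₃⟩, h⟩ := h
  refine ⟨⟨x, y, z, w, hx, hy, hz, hw, (hadj _ _).2 (Or.inl h₁), (hadj _ _).2 (Or.inl h₂),
    (hadj _ _).2 (Or.inl h₃)⟩, fun a b ha hb hab => ?_⟩
  rcases (hadj a b).1 hab with hab | ⟨rfl, rfl⟩ | ⟨rfl, rfl⟩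
  · exact h a b ha hb hab
  · exact hi (Or.inl ⟨ha, hb⟩)
  · exact hi (Or.inr ⟨ha, hb⟩)

/-- A single operation destroys at most one live path. -/
lemma OpStep.exists_live {op : Op} {G G' : BGraph} {sA sB : Bool} (h : OpStep sA sB op G G')
    {n : ℕ} (hn : 3 ≤ n) (hG : Supported G) (f : ℕ → ℕ) :
    Supported G' ∧ ∃ f' j, ∀ i < n, i ≠ j → Live G f n i → Live G' f' n i := by
  cases h with
  | del _ hA hB hadj =>
    refine ⟨fun x y hxy => ?_, f, _, fun i _ hi => Live.del hadj hi⟩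
    have := hG x y ((hadj x y).1 hxy).1
    rwa [verts, hA, hB]
  | @add _ _ u v hu hv _ hA hB hadj =>
    refine ⟨fun x y hxy => ?_, f, ?_⟩
    · have : x ∈ verts G := by
        rcases (hadj x y).1 hxy with h | ⟨rfl, -⟩ | ⟨rfl, -⟩
        · exact hG x y h
        · exact Or.inl hu
        · exact Or.inr hv
      rwa [verts, hA, hB]
    · by_cases hex : ∃ j < n,
          (f u = 3 * j ∧ f v = pathEnd n j) ∨ (f v = 3 * j ∧ f u = pathEnd n j)
      · obtain ⟨j, hj, hends⟩ := hex
        exact ⟨j, fun i hi hij => Live.add hadj fun h => hij (eq_of_ends_eq hn hi hj h hends)⟩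
      · exact ⟨0, fun i hi _ => Live.add hadj fun h => hex ⟨i, hi, h⟩⟩
  | @split _ _ v v' N₁ N₂ hside hfresh hcover hA hB hadj =>
    have hv : v ∈ verts G := hside.imp And.left And.left
    have hverts : verts G' = insert v' (verts G) := by
      rcases hv with hv | hv
      · rw [verts, (hA hv).1, (hA hv).2, verts, Set.insert_union]
      · rw [verts, (hB hv).1, (hB hv).2, verts, Set.union_insert]
    exact ⟨supported_of_split hG hv hcover hverts hadj, Function.update f v' (f v), f v / 3,
      fun i _ hi => Live.split (by omega) hG hfresh hcover hadj hi⟩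

lemma card_le_length_of_live {sA sB : Bool} {n : ℕ} (hn : 3 ≤ n) {G' : BGraph}
    (hbic : IsBicliqueUnion G') (L : List Op) : ∀ (G : BGraph) (f : ℕ → ℕ) (S : Finset ℕ),
      Supported G → ApplySeq sA sB L G G' → (∀ i ∈ S, i < n ∧ Live G f n i) →
      S.card ≤ L.length := by
  induction L with
  | nil =>
    rintro G f S - rfl hS
    rw [Finset.eq_empty_of_forall_notMem fun i hi => (hS i hi).2.not_isBicliqueUnion hbic]
    simp
  | cons op L ih =>
    rintro G f S hG ⟨G₁, hstep, happ⟩ hS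
    obtain ⟨hG₁, f', j, hlive⟩ := hstep.exists_live hn hG f
    have := ih G₁ f' (S.erase j) hG₁ happ fun i hi =>
      have hi' := Finset.mem_erase.1 hi
      ⟨(hS i hi'.2).1, hlive i (hS i hi'.2).1 hi'.1 (hS i hi'.2).2⟩
    have := Finset.pred_card_le_card_erase (s := S) (a := j)
    simp only [List.length_cons]
    omega

lemma IsCycleWith.supported {G : BGraph} {p : ℕ → ℕ} {m : ℕ} (h : IsCycleWith G p m) :
    Supported G := by
  obtain ⟨-, hA, hB, hadj⟩ := h
  have hp : ∀ i < m, p i ∈ verts G := by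
    intro i hi
    rcases Nat.mod_two_eq_zero_or_one i with h | h
    · exact Or.inl (hA ▸ ⟨i, ⟨hi, h⟩, rfl⟩)
    · exact Or.inr (hB ▸ ⟨i, ⟨hi, h⟩, rfl⟩)
  intro x y hxy
  obtain ⟨i, hi, ⟨rfl, -⟩ | ⟨-, rfl⟩⟩ := (hadj x y).1 hxy
  · exact hp i hi
  · exact hp _ (Nat.mod_lt _ (by omega))

/-- In a cycle of length `3n` all `n` paths are live. -/
lemma IsCycleWith.live {G : BGraph} {p : ℕ → ℕ} {n m i : ℕ} (hm : m = 3 * n)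
    (h : IsCycleWith G p m) (hn : 3 ≤ n) (hi : i < n) :
    Live G (Function.invFunOn p {i | i < m}) n i := by
  obtain ⟨hinj, -, -, hadj⟩ := h
  have hinv : ∀ j < m, Function.invFunOn p {i | i < m} (p j) = j := fun j hj =>
    Set.InjOn.leftInvOn_invFunOn (fun a ha b hb => hinj a b ha hb) hj
  have hsucc : ∀ j < m, (j + 1) % m = if j + 1 = m then 0 else j + 1 := by
    intro j hj
    split_ifs with h
    · rw [h, Nat.mod_self]
    · exact Nat.mod_eq_of_lt (by omega)
  have hlt : pathEnd n i < m := by unfold pathEnd; split_ifs <;> omega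
  have hedge : ∀ j < m, G.Adj (p j) (p (if j + 1 = m then 0 else j + 1)) := fun j hj =>
    (hadj _ _).2 ⟨j, hj, Or.inl ⟨rfl, by rw [hsucc j hj]⟩⟩
  refine ⟨⟨p (3 * i), p (3 * i + 1), p (3 * i + 2), p (pathEnd n i), hinv _ (by omega),
    hinv _ (by omega), hinv _ (by omega), hinv _ hlt, ?_, ?_, ?_⟩, ?_⟩
  · simpa [show 3 * i + 1 ≠ m by omega] using hedge (3 * i) (by omega)
  · simpa [show 3 * i + 1 + 1 ≠ m by omega] using hedge (3 * i + 1) (by omega)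
  · convert hedge (3 * i + 2) (by omega) using 2
    unfold pathEnd
    split_ifs <;> omega
  · intro x w hx hw hxw
    obtain ⟨j, hj, ⟨rfl, rfl⟩ | ⟨rfl, rfl⟩⟩ := (hadj x w).1 hxw <;>
    · rw [hinv _ (Nat.mod_lt _ (by omega)), hsucc j hj] at *
      rw [hinv j hj] at *
      unfold pathEnd at hw
      split_ifs at * <;> omega

/-- For every `k ≥ 2`, every sequence of edge editions and
vertex splittings transforming the cycle `C_{6k}` into a disjoint union of
bicliques has length at least `2k`. -/
theorem cycle_lower_bound (k : ℕ) (hk : 2 ≤ k) (G : BGraph) (p : ℕ → ℕ)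
    (hcyc : IsCycleWith G p (6 * k)) (L : List Op) (G' : BGraph)
    (happ : ApplySeq true true L G G') (hbic : IsBicliqueUnion G') :
    2 * k ≤ L.length := by
  have h := card_le_length_of_live (n := 2 * k) (by omega) hbic L G _ (Finset.range (2 * k))
    hcyc.supported happ fun i hi =>
      ⟨Finset.mem_range.1 hi, hcyc.live (by omega) (by omega) (Finset.mem_range.1 hi)⟩
  rwa [Finset.card_range] at h

end BCE
end

section
/- For every integer k ≥ 2, the sequences of exactly 2k edge editions and vertex splittings that transform the cycle C_{6k} with consecutive vertices v_1, …, v_{6k} into a disjoint union of bicliques are exactly the following three sequences of edge deletions: delete the edges v_{1+3i} v_{2+3i} for every i with 0 ≤ i ≤ 2k−1; delete the edges v_{2+3i} v_{3+3i} for every such i; delete the edges v_{3+3i} v_{4+3i} for every such i (indices taken modulo 6k). -/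
namespace BCE

open Finset

/-- The maximal number of windows (paths of three consecutive edges of a long cycle) which a single
operation can destroy. -/
def Op.weight : Op → ℕ
  | Op.del _ _ => 3
  | Op.add _ _ => 1
  | Op.split _ _ _ _ => 2

/-- `q` enumerates cyclically the vertices of the cycle `G`. -/
structure IsCyclicEnum {m : ℕ} (G : BGraph) (q : ZMod m → ℕ) : Prop where
  inj : Function.Injective q
  mem : ∀ i, q i ∈ verts G
  adj : ∀ x y, G.Adj x y ↔ ∃ i, (x = q i ∧ y = q (i + 1)) ∨ (y = q i ∧ x = q (i + 1))

/-- `Tracks H π x y`: in the graph `H`, obtained from a cycle by a sequence of operations, `π` maps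
each vertex to its origin, and the pair `x i`, `y i` represents the `i`-th edge of the cycle, which
may have been deleted. -/
structure Tracks {m : ℕ} (H : BGraph) (π : ℕ → ZMod m) (x y : ZMod m → ℕ) : Prop where
  left : ∀ i, π (x i) = i
  right : ∀ i, π (y i) = i + 1
  memLeft : ∀ i, x i ∈ verts H
  memRight : ∀ i, y i ∈ verts H
  adjMem : ∀ u v, H.Adj u v → u ∈ verts H

/-- The representatives of the edges `i`, `i + 1`, `i + 2` of the cycle form a path of `H` whose ends
are not adjacent. -/
structure Alive {m : ℕ} (H : BGraph) (x y : ZMod m → ℕ) (i : ZMod m) : Prop where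
  fst : H.Adj (x i) (y i)
  snd : H.Adj (x (i + 1)) (y (i + 1))
  thd : H.Adj (x (i + 2)) (y (i + 2))
  joinFst : y i = x (i + 1)
  joinSnd : y (i + 1) = x (i + 2)
  ends : ¬ H.Adj (x i) (y (i + 2))

theorem natCast_zmod_ne_zero {m n : ℕ} (hn : 0 < n) (hm : n < m) : (n : ZMod m) ≠ 0 := by
  rw [Ne, ZMod.natCast_eq_zero_iff]
  exact Nat.not_dvd_of_pos_of_lt hn hm

theorem Tracks.exists_of_del {m : ℕ} (hm : 6 < m) {H H' : BGraph} {π : ℕ → ZMod m}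
    {x y : ZMod m → ℕ} {u v : ℕ} {sA sB : Bool} (T : Tracks H π x y)
    (h : OpStep sA sB (Op.del u v) H H') :
    Tracks H' π x y ∧
      ∃ K : Finset (ZMod m), #K ≤ 3 ∧ ∀ i, Alive H x y i → Alive H' x y i ∨ i ∈ K := by
  classical
  cases h with
  | del h hA hB hadj =>
    have hv : verts H' = verts H := by simp [verts, hA, hB]
    refine ⟨⟨T.left, T.right, hv ▸ T.memLeft, hv ▸ T.memRight, fun a b hab => ?_⟩, ?_⟩
    · rw [hv]
      exact T.adjMem a b ((hadj a b).1 hab).1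
    · have key : ∃ j, ∀ i, H.Adj (x i) (y i) → H'.Adj (x i) (y i) ∨ i = j := by
        have h2 : (2 : ZMod m) ≠ 0 := by
          exact_mod_cast natCast_zmod_ne_zero (n := 2) (by omega) (by omega)
        refine ⟨if π v = π u + 1 then π u else π v, fun i hi => ?_⟩
        by_cases hc : (x i = u ∧ y i = v) ∨ (x i = v ∧ y i = u)
        · right
          have hl := T.left i
          have hr := T.right i
          rcases hc with ⟨h1, h1'⟩ | ⟨h1, h1'⟩
          · rw [h1] at hl
            rw [h1'] at hr
            rw [if_pos (by rw [hl, hr]), hl]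
          · rw [h1] at hl
            rw [h1'] at hr
            rw [if_neg, hl]
            intro h3
            apply h2
            rw [hl, hr] at h3
            linear_combination -h3
        · exact Or.inl ((hadj _ _).2 ⟨hi, hc⟩)
      obtain ⟨j, hj⟩ := key
      refine ⟨{j, j - 1, j - 2}, Finset.card_le_three, fun i hi => ?_⟩
      by_cases hK : i ∈ ({j, j - 1, j - 2} : Finset (ZMod m))
      · exact Or.inr hK
      · simp only [Finset.mem_insert, Finset.mem_singleton, not_or] at hK
        exact Or.inl ⟨(hj _ hi.fst).resolve_right hK.1,
          (hj _ hi.snd).resolve_right fun h => hK.2.1 (eq_sub_of_add_eq h),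
          (hj _ hi.thd).resolve_right fun h => hK.2.2 (eq_sub_of_add_eq h),
          hi.joinFst, hi.joinSnd, fun h => hi.ends ((hadj _ _).1 h).1⟩

theorem Tracks.exists_of_add {m : ℕ} (hm : 6 < m) {H H' : BGraph} {π : ℕ → ZMod m}
    {x y : ZMod m → ℕ} {u v : ℕ} {sA sB : Bool} (T : Tracks H π x y)
    (h : OpStep sA sB (Op.add u v) H H') :
    Tracks H' π x y ∧
      ∃ K : Finset (ZMod m), #K ≤ 1 ∧ ∀ i, Alive H x y i → Alive H' x y i ∨ i ∈ K := by
  cases h with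
  | add hu hv' h hA hB hadj =>
    have hv : verts H' = verts H := by simp [verts, hA, hB]
    refine ⟨⟨T.left, T.right, hv ▸ T.memLeft, hv ▸ T.memRight, fun a b hab => ?_⟩, ?_⟩
    · rw [hv]
      rcases (hadj a b).1 hab with h | ⟨rfl, -⟩ | ⟨rfl, -⟩
      · exact T.adjMem a b h
      · exact Or.inl hu
      · exact Or.inr hv'
    · have h6 : (6 : ZMod m) ≠ 0 := by
        exact_mod_cast natCast_zmod_ne_zero (n := 6) (by omega) hm
      refine ⟨{if π v = π u + 3 then π u else π v}, by simp, fun i hi => ?_⟩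
      rw [Finset.mem_singleton]
      have hmono : ∀ {a b}, H.Adj a b → H'.Adj a b := fun h => (hadj _ _).2 (Or.inl h)
      by_cases hc : (x i = u ∧ y (i + 2) = v) ∨ (x i = v ∧ y (i + 2) = u)
      · right
        have hl := T.left i
        have hr := T.right (i + 2)
        rcases hc with ⟨h1, h1'⟩ | ⟨h1, h1'⟩
        · rw [h1] at hl
          rw [h1'] at hr
          rw [if_pos (by rw [hl, hr]; ring), hl]
        · rw [h1] at hl
          rw [h1'] at hr
          rw [if_neg, hl]
          intro h3
          apply h6
          rw [hl, hr] at h3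
          linear_combination -h3
      · exact Or.inl ⟨hmono hi.fst, hmono hi.snd, hmono hi.thd, hi.joinFst, hi.joinSnd,
          fun h => ((hadj _ _).1 h).elim hi.ends hc⟩

theorem Tracks.exists_of_split {m : ℕ} (hm : 6 < m) {H H' : BGraph} {π : ℕ → ZMod m}
    {x y : ZMod m → ℕ} {v v' : ℕ} {N1 N2 : Set ℕ} {sA sB : Bool} (T : Tracks H π x y)
    (h : OpStep sA sB (Op.split v v' N1 N2) H H') :
    ∃ (π' : ℕ → ZMod m) (x' y' : ZMod m → ℕ), Tracks H' π' x' y' ∧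
      ∃ K : Finset (ZMod m), #K ≤ 2 ∧ ∀ i, Alive H x y i → Alive H' x' y' i ∨ i ∈ K := by
  classical
  cases h with
  | split hside hfresh hcover hA hB hadj =>
    have hv : verts H' = insert v' (verts H) := by
      rcases hside with ⟨h, -⟩ | ⟨h, -⟩
      · simp [verts, hA h, Set.insert_union]
      · simp [verts, hB h, Set.union_insert]
    have hvm : v ∈ verts H := hside.imp And.left And.left
    have hN1 : ∀ {a}, a ∈ N1 → H.Adj v a := fun {a} h => by
      have h' : a ∈ N1 ∪ N2 := Or.inl h
      rwa [hcover] at h'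
    have hN2 : ∀ {a}, a ∈ N2 → H.Adj v a := fun {a} h => by
      have h' : a ∈ N1 ∪ N2 := Or.inr h
      rwa [hcover] at h'
    have hN : ∀ {a}, H.Adj v a → a ∉ N1 → a ∈ N2 := fun {a} h h' => by
      have : a ∈ N1 ∪ N2 := hcover ▸ h
      exact this.resolve_left h'
    have hne : ∀ {a}, a ∈ verts H → a ≠ v' := fun h h' => hfresh (h' ▸ h)
    have hmem : ∀ {a b}, H.Adj a b → b ∈ verts H := fun h => T.adjMem _ _ (H.symm _ _ h)
    have hxy : ∀ i, x i ≠ y i := fun i h => by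
      have h1 := T.left i
      rw [h, T.right i] at h1
      have h0 := natCast_zmod_ne_zero (m := m) (n := 1) (by omega) (by omega)
      rw [Nat.cast_one] at h0
      exact h0 (by linear_combination h1)
    let φ : ℕ → ℕ := fun a => if a = v' then v else a
    have hφ : ∀ {a}, a ∈ verts H → φ a = a := fun h => if_neg (hne h)
    have hφv' : φ v' = v := if_pos rfl
    -- `move a b` is the new position of the end `a` of the represented edge `a b`
    let move : ℕ → ℕ → ℕ := fun a b => if a = v ∧ b ∉ N1 then v' else a
    have hφmove : ∀ {a b}, a ∈ verts H → φ (move a b) = a := by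
      intro a b ha
      by_cases hc : a = v ∧ b ∉ N1
      · simp only [move, if_pos hc]
        rw [hφv', hc.1]
      · simp only [move, if_neg hc, hφ ha]
    have hmove_ne : ∀ {a b}, a ≠ v → move a b = a := fun h => if_neg fun h' => h h'.1
    have hmove_mem : ∀ {a b}, a ∈ verts H → move a b ∈ verts H' := by
      intro a b ha
      rw [hv]
      by_cases hc : a = v ∧ b ∉ N1
      · simp only [move, if_pos hc]
        exact Set.mem_insert _ _
      · simp only [move, if_neg hc]
        exact Set.mem_insert_of_mem _ ha
    have hproj : ∀ {a b}, H'.Adj a b → H.Adj (φ a) (φ b) := by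
      intro a b h
      rcases (hadj a b).1 h with ⟨h, -, -⟩ | ⟨rfl, h⟩ | ⟨rfl, h⟩ | ⟨rfl, h⟩ | ⟨rfl, h⟩
      · rwa [hφ (T.adjMem _ _ h), hφ (hmem h)]
      · rw [hφ hvm, hφ (hmem (hN1 h))]
        exact hN1 h
      · rw [hφ hvm, hφ (hmem (hN1 h))]
        exact H.symm _ _ (hN1 h)
      · rw [hφv', hφ (hmem (hN2 h))]
        exact hN2 h
      · rw [hφv', hφ (hmem (hN2 h))]
        exact H.symm _ _ (hN2 h)
    have hedge : ∀ {a b}, H.Adj a b → a ≠ b → H'.Adj (move a b) (move b a) := by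
      have hv_edge : ∀ {b}, H.Adj v b → b ≠ v → H'.Adj (move v b) (move b v) := by
        intro b h hb
        rw [hmove_ne hb, hadj]
        by_cases hc : b ∈ N1
        · simp [move, hc]
        · simp [move, hc, hN h hc]
      intro a b h hab
      by_cases ha : a = v
      · subst ha
        exact hv_edge h hab.symm
      · by_cases hb : b = v
        · subst hb
          exact H'.symm _ _ (hv_edge (H.symm _ _ h) hab)
        · rw [hmove_ne ha, hmove_ne hb, hadj]
          exact Or.inl ⟨h, ha, hb⟩
    refine ⟨π ∘ φ, fun i => move (x i) (y i), fun i => move (y i) (x i), ⟨fun i => ?_, fun i => ?_,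
      fun i => hmove_mem (T.memLeft i), fun i => hmove_mem (T.memRight i), fun a b hab => ?_⟩,
      {π v - 1, π v - 2}, Finset.card_le_two, fun i hi => ?_⟩
    · rw [Function.comp_apply, hφmove (T.memLeft i), T.left]
    · rw [Function.comp_apply, hφmove (T.memRight i), T.right]
    · rw [hv]
      by_cases ha : a = v'
      · exact Or.inl ha
      · have h := T.adjMem _ _ (hproj hab)
        rw [show φ a = a from if_neg ha] at h
        exact Or.inr h
    · by_cases hK : i ∈ ({π v - 1, π v - 2} : Finset (ZMod m))
      · exact Or.inr hK
      · simp only [Finset.mem_insert, Finset.mem_singleton, not_or] at hK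
        have h1 : y i ≠ v := fun h => hK.1 (by rw [← h, T.right]; ring)
        have h2 : y (i + 1) ≠ v := fun h => hK.2 (by rw [← h, T.right]; ring)
        refine Or.inl ⟨hedge hi.fst (hxy _), hedge hi.snd (hxy _), hedge hi.thd (hxy _), ?_, ?_,
          fun h => hi.ends ?_⟩
        · rw [hmove_ne h1, hmove_ne (hi.joinFst ▸ h1), hi.joinFst]
        · rw [hmove_ne h2, hmove_ne (hi.joinSnd ▸ h2), hi.joinSnd]
        · have h' := hproj h
          rwa [hφmove (T.memLeft i), hφmove (T.memRight _)] at h'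

theorem Tracks.exists_of_opStep {m : ℕ} (hm : 6 < m) {H H' : BGraph} {π : ℕ → ZMod m}
    {x y : ZMod m → ℕ} {op : Op} {sA sB : Bool} (T : Tracks H π x y) (h : OpStep sA sB op H H') :
    ∃ (π' : ℕ → ZMod m) (x' y' : ZMod m → ℕ), Tracks H' π' x' y' ∧
      ∃ K : Finset (ZMod m), #K ≤ op.weight ∧
        ∀ i, Alive H x y i → Alive H' x' y' i ∨ i ∈ K := by
  cases op with
  | del u v => exact ⟨π, x, y, T.exists_of_del hm h⟩
  | add u v => exact ⟨π, x, y, T.exists_of_add hm h⟩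
  | split v v' N1 N2 => exact T.exists_of_split hm h

theorem Tracks.card_alive_le {m : ℕ} (hm : 6 < m) {sA sB : Bool} {H' : BGraph}
    (hH' : IsBicliqueUnion H') (L : List Op) :
    ∀ {H : BGraph} {π : ℕ → ZMod m} {x y : ZMod m → ℕ}, Tracks H π x y →
      ApplySeq sA sB L H H' → ∀ S : Finset (ZMod m), (∀ i ∈ S, Alive H x y i) →
        #S ≤ (L.map Op.weight).sum := by
  classical
  induction L with
  | nil =>
    rintro H π x y - rfl S hS
    rw [Finset.eq_empty_of_forall_notMem (s := S)]
    · simp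
    · intro i hi
      have a := hS i hi
      refine a.ends (hH' _ _ _ _ a.fst ?_ (a.joinSnd ▸ a.thd))
      rw [a.joinFst]
      exact a.snd
  | cons op L ih =>
    rintro H π x y T ⟨H₁, hstep, happ⟩ S hS
    obtain ⟨π', x', y', T', K, hK, hal⟩ := T.exists_of_opStep hm hstep
    have h1 := ih T' happ (S \ K) fun i hi => by
      rw [Finset.mem_sdiff] at hi
      exact (hal i (hS i hi.1)).resolve_right hi.2
    have h2 : #S ≤ #(S \ K) + #K := by
      have := Finset.card_sdiff_add_card S K
      have := Finset.card_le_card (Finset.subset_union_left (s₁ := S) (s₂ := K))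
      omega
    rw [List.map_cons, List.sum_cons]
    omega

theorem IsCyclicEnum.not_adj_add_three {m : ℕ} (hm : 6 < m) {G : BGraph} {q : ZMod m → ℕ}
    (C : IsCyclicEnum G q) (i : ZMod m) : ¬ G.Adj (q i) (q (i + 3)) := by
  have h2 : (2 : ZMod m) ≠ 0 := by
    exact_mod_cast natCast_zmod_ne_zero (n := 2) (by omega) (by omega)
  have h4 : (4 : ZMod m) ≠ 0 := by
    exact_mod_cast natCast_zmod_ne_zero (n := 4) (by omega) (by omega)
  rw [C.adj]
  rintro ⟨j, ⟨h, h'⟩ | ⟨h, h'⟩⟩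
  · exact h2 (by linear_combination C.inj h' - C.inj h)
  · exact h4 (by linear_combination C.inj h - C.inj h')

theorem IsCyclicEnum.adj_succ {m : ℕ} {G : BGraph} {q : ZMod m → ℕ}
    (C : IsCyclicEnum G q) (i : ZMod m) : G.Adj (q i) (q (i + 1)) :=
  (C.adj _ _).2 ⟨i, Or.inl ⟨rfl, rfl⟩⟩

theorem IsCyclicEnum.le_sum_weight {m : ℕ} (hm : 6 < m) {G G' : BGraph} {q : ZMod m → ℕ}
    (C : IsCyclicEnum G q) {sA sB : Bool} {L : List Op} (h : ApplySeq sA sB L G G')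
    (hG' : IsBicliqueUnion G') : m ≤ (L.map Op.weight).sum := by
  have : NeZero m := ⟨by omega⟩
  have hinv : ∀ i, Function.invFun q (q i) = i := Function.leftInverse_invFun C.inj
  have T : Tracks G (Function.invFun q) q (fun i => q (i + 1)) :=
    ⟨hinv, fun i => hinv _, C.mem, fun i => C.mem _, fun u v huv => by
      obtain ⟨i, ⟨rfl, -⟩ | ⟨-, rfl⟩⟩ := (C.adj u v).1 huv <;> exact C.mem _⟩
  have := T.card_alive_le hm hG' L h Finset.univ fun i _ =>
    ⟨C.adj_succ _, C.adj_succ _, C.adj_succ _, rfl, by ring_nf, by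
      have := C.not_adj_add_three hm i
      rwa [show i + 2 + 1 = i + 3 by ring]⟩
  simpa [ZMod.card] using this

theorem forall_weight_eq_three : ∀ L : List Op, 3 * L.length ≤ (L.map Op.weight).sum →
    ∀ op ∈ L, op.weight = 3 := by
  have hw : ∀ op : Op, op.weight ≤ 3 := by
    rintro (_ | _ | _) <;> simp [Op.weight]
  have hsum : ∀ L : List Op, (L.map Op.weight).sum ≤ 3 * L.length := fun L => by
    induction L with
    | nil => simp
    | cons a L ih =>
      have := hw a
      simp only [List.map_cons, List.sum_cons, List.length_cons]
      omega
  intro L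
  induction L with
  | nil => simp
  | cons a L ih =>
    intro h
    have h1 := hw a
    have h2 := hsum L
    simp only [List.map_cons, List.sum_cons, List.length_cons] at h
    rintro op hop
    rcases List.mem_cons.1 hop with rfl | hop
    · omega
    · exact ih (by omega) op hop

theorem Op.exists_eq_del_of_weight {op : Op} (h : op.weight = 3) : ∃ u v, op = Op.del u v := by
  cases op with
  | del u v => exact ⟨u, v, rfl⟩
  | add u v => simp [Op.weight] at h
  | split v v' N1 N2 => simp [Op.weight] at h

theorem adj_of_applySeq_del {sA sB : Bool} (L : List Op) :
    ∀ {G G' : BGraph}, (∀ op ∈ L, ∃ u v, op = Op.del u v) → ApplySeq sA sB L G G' →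
      (∀ u v, Op.del u v ∈ L → G.Adj u v) ∧
      ∀ x y, G'.Adj x y ↔ G.Adj x y ∧ Op.del x y ∉ L ∧ Op.del y x ∉ L := by
  induction L with
  | nil =>
    rintro G G' - rfl
    simp
  | cons op L ih =>
    rintro G G' hL ⟨G₁, hstep, happ⟩
    obtain ⟨u, v, rfl⟩ := hL op List.mem_cons_self
    obtain ⟨h1, h2⟩ := ih (fun op hop => hL op (List.mem_cons_of_mem _ hop)) happ
    cases hstep with
    | del h hA hB hadj =>
      constructor
      · intro a b hab
        rcases List.mem_cons.1 hab with h' | h'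
        · cases h'
          exact h
        · exact ((hadj _ _).1 (h1 a b h')).1
      · intro a b
        rw [h2, hadj]
        simp only [List.mem_cons, Op.del.injEq]
        tauto

/-- The graph obtained from `G` by deleting the edge `u v`. -/
def deleteEdge (G : BGraph) (u v : ℕ) : BGraph where
  A := G.A
  B := G.B
  finA := G.finA
  finB := G.finB
  Adj x y := G.Adj x y ∧ ¬((x = u ∧ y = v) ∨ (x = v ∧ y = u))
  symm x y h := ⟨G.symm x y h.1, fun h' => h.2 (by tauto)⟩

theorem exists_applySeq_del {sA sB : Bool} (L : List Op) :
    ∀ G : BGraph, (∀ op ∈ L, ∃ u v, op = Op.del u v ∧ G.Adj u v) →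
      L.Pairwise (fun a b => ∀ u v, a = Op.del u v → b ≠ Op.del u v ∧ b ≠ Op.del v u) →
      ∃ G', ApplySeq sA sB L G G' := by
  induction L with
  | nil => exact fun G _ _ => ⟨G, rfl⟩
  | cons op L ih =>
    intro G hL hp
    obtain ⟨u, v, rfl, huv⟩ := hL op List.mem_cons_self
    rw [List.pairwise_cons] at hp
    obtain ⟨G', hG'⟩ := ih (deleteEdge G u v) (fun op hop => by
      obtain ⟨a, b, rfl, hab⟩ := hL op (List.mem_cons_of_mem _ hop)
      refine ⟨a, b, rfl, hab, ?_⟩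
      have := hp.1 _ hop u v rfl
      rintro (⟨rfl, rfl⟩ | ⟨rfl, rfl⟩)
      · exact this.1 rfl
      · exact this.2 rfl) hp.2
    exact ⟨G', deleteEdge G u v, .del huv rfl rfl fun _ _ => Iff.rfl, hG'⟩

/-- A set of at most `2 k` residues modulo `6 k` that meets every window of three consecutive
residues meets each of them exactly once. -/
theorem window_count_eq_one {k : ℕ} (hk : 0 < k) (D : Finset (ZMod (6 * k))) (hD : #D ≤ 2 * k)
    (hwin : ∀ i, i ∈ D ∨ i + 1 ∈ D ∨ i + 2 ∈ D) (i : ZMod (6 * k)) :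
    (if i ∈ D then 1 else 0) + (if i + 1 ∈ D then 1 else 0) + (if i + 2 ∈ D then 1 else 0) = 1 := by
  have : NeZero (6 * k) := ⟨by omega⟩
  let f : ZMod (6 * k) → ℕ := fun i => if i ∈ D then 1 else 0
  have hshift : ∀ c, ∑ i, f (i + c) = #D := fun c => by
    rw [show ∑ i, f (i + c) = ∑ i, f i from Equiv.sum_comp (Equiv.addRight c) f]
    simp [f]
  have hle : ∀ i ∈ Finset.univ, 1 ≤ f (i + 0) + f (i + 1) + f (i + 2) := fun i _ => by
    rw [add_zero]
    rcases hwin i with h | h | h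
    all_goals
      simp only [f, if_pos h]
      omega
  have hsum : ∑ i : ZMod (6 * k), (f (i + 0) + f (i + 1) + f (i + 2)) = 3 * #D := by
    rw [Finset.sum_add_distrib, Finset.sum_add_distrib, hshift, hshift, hshift]
    ring
  have hge := Finset.sum_le_sum hle
  rw [hsum] at hge
  have hcard : ∑ _i : ZMod (6 * k), 1 = 6 * k := by simp [ZMod.card]
  have heq := (Finset.sum_eq_sum_iff_of_le hle).1 (by rw [hsum]; omega) i (Finset.mem_univ i)
  rw [add_zero] at heq
  exact heq.symm

/-- Such a set is a residue class modulo `3`. -/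
theorem exists_residue_of_window {k : ℕ} (hk : 0 < k) (D : Finset (ZMod (6 * k)))
    (hD : #D ≤ 2 * k) (hwin : ∀ i, i ∈ D ∨ i + 1 ∈ D ∨ i + 2 ∈ D) :
    ∃ r < 3, ∀ n : ℕ, (n : ZMod (6 * k)) ∈ D ↔ n % 3 = r := by
  have hone := window_count_eq_one hk D hD hwin
  have hstep : ∀ n : ℕ, ((n + 3 : ℕ) : ZMod (6 * k)) ∈ D ↔ (n : ZMod (6 * k)) ∈ D := fun n => by
    have h0 := hone n
    have h1 := hone (n + 1)
    rw [show (n : ZMod (6 * k)) + 1 + 1 = n + 2 by ring,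
      show (n : ZMod (6 * k)) + 1 + 2 = n + 3 by ring] at h1
    push_cast
    split_ifs at h0 h1 <;> simp_all
  have hmod : ∀ n : ℕ, (n : ZMod (6 * k)) ∈ D ↔ ((n % 3 : ℕ) : ZMod (6 * k)) ∈ D := by
    intro n
    induction n using Nat.strong_induction_on with
    | _ n ih =>
      by_cases hn : n < 3
      · rw [Nat.mod_eq_of_lt hn]
      · obtain ⟨l, rfl⟩ := Nat.exists_eq_add_of_le' (not_lt.1 hn)
        rw [hstep, ih l (by omega), Nat.add_mod_right]
  have h0 := hone 0
  simp only [zero_add] at h0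
  have hlt : ∀ n : ℕ, n % 3 = 0 ∨ n % 3 = 1 ∨ n % 3 = 2 := fun n => by omega
  rcases hwin 0 with h | h | h
  · have h1 : 1 ∉ D := fun h' => by
      rw [if_pos h, if_pos h'] at h0
      omega
    have h2 : 2 ∉ D := fun h' => by
      rw [if_pos h, if_pos h'] at h0
      omega
    refine ⟨0, by omega, fun n => ?_⟩
    rw [hmod]
    rcases hlt n with h' | h' | h' <;> rw [h'] <;> simp [*]
  · rw [zero_add] at h
    have h1 : 0 ∉ D := fun h' => by
      rw [if_pos h, if_pos h'] at h0
      omega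
    have h2 : 2 ∉ D := fun h' => by
      rw [if_pos h, if_pos h'] at h0
      omega
    refine ⟨1, by omega, fun n => ?_⟩
    rw [hmod]
    rcases hlt n with h' | h' | h' <;> rw [h'] <;> simp [*]
  · rw [zero_add] at h
    have h1 : 0 ∉ D := fun h' => by
      rw [if_pos h, if_pos h'] at h0
      omega
    have h2 : 1 ∉ D := fun h' => by
      rw [if_pos h, if_pos h'] at h0
      omega
    refine ⟨2, by omega, fun n => ?_⟩
    rw [hmod]
    rcases hlt n with h' | h' | h' <;> rw [h'] <;> simp [*]

/-- `op` deletes the edge `q i`, `q (i + 1)`. -/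
def IsDelAt {m : ℕ} (q : ZMod m → ℕ) (i : ZMod m) (op : Op) : Prop :=
  op = Op.del (q i) (q (i + 1)) ∨ op = Op.del (q (i + 1)) (q i)

theorem IsDelAt.index_unique {m : ℕ} (hm : 6 < m) {q : ZMod m → ℕ} (hq : Function.Injective q)
    {i j : ZMod m} {op : Op} (hi : IsDelAt q i op) (hj : IsDelAt q j op) : i = j := by
  have h2 : (2 : ZMod m) ≠ 0 := by
    exact_mod_cast natCast_zmod_ne_zero (n := 2) (by omega) (by omega)
  rcases hi with rfl | rfl <;> rcases hj with h | h <;> rw [Op.del.injEq] at h <;>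
    obtain ⟨ha, hb⟩ := h <;> have ha := hq ha <;> have hb := hq hb
  · exact ha
  · exact absurd (by linear_combination hb - ha) h2
  · exact absurd (by linear_combination ha - hb) h2
  · exact hb

theorem IsCyclicEnum.exists_residue {k : ℕ} (hk : 2 ≤ k) {G : BGraph} {q : ZMod (6 * k) → ℕ}
    (C : IsCyclicEnum G q) {sA sB : Bool} {L : List Op} (hlen : L.length = 2 * k)
    (h : Solves sA sB L G) :
    ∃ r < 3, (∀ n : ℕ, n % 3 = r → ∃ op ∈ L, IsDelAt q n op) ∧
      ∀ op ∈ L, ∃ n < 6 * k, n % 3 = r ∧ IsDelAt q n op := by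
  classical
  have hm : 6 < 6 * k := by omega
  have : NeZero (6 * k) := ⟨by omega⟩
  obtain ⟨G', happ, hG'⟩ := h
  have hdel : ∀ op ∈ L, ∃ u v, op = Op.del u v := fun op hop =>
    Op.exists_eq_del_of_weight (forall_weight_eq_three L
      (by have := C.le_sum_weight hm happ hG'; omega) op hop)
  obtain ⟨hadj, hadj'⟩ := adj_of_applySeq_del L hdel happ
  let D : Finset (ZMod (6 * k)) := Finset.univ.filter fun i => ∃ op ∈ L, IsDelAt q i op
  have hmemD : ∀ i, i ∈ D ↔ ∃ op ∈ L, IsDelAt q i op := fun i => by simp [D]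
  have hD : #D ≤ 2 * k := by
    have hex : ∀ i, ∃ op, i ∈ D → op ∈ L ∧ IsDelAt q i op := fun i => by
      by_cases hi : i ∈ D
      · obtain ⟨op, h⟩ := (hmemD i).1 hi
        exact ⟨op, fun _ => h⟩
      · exact ⟨Op.del 0 0, fun h => absurd h hi⟩
    choose f hf using hex
    calc #D ≤ #L.toFinset := Finset.card_le_card_of_injOn f
          (fun i hi => List.mem_toFinset.2 (hf i hi).1)
          fun i hi j hj hij => (hf i hi).2.index_unique hm C.inj (hij ▸ (hf j hj).2)
      _ ≤ L.length := L.toFinset_card_le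
      _ = 2 * k := hlen
  have hkeep : ∀ i, i ∉ D → G'.Adj (q i) (q (i + 1)) := fun i hi => by
    rw [hmemD] at hi
    exact (hadj' _ _).2 ⟨C.adj_succ i, fun h => hi ⟨_, h, Or.inl rfl⟩,
      fun h => hi ⟨_, h, Or.inr rfl⟩⟩
  have hwin : ∀ i, i ∈ D ∨ i + 1 ∈ D ∨ i + 2 ∈ D := by
    intro i
    by_contra! hc
    refine C.not_adj_add_three hm i ((hadj' _ _).1
      (hG' _ _ _ _ (hkeep _ hc.1) (hkeep _ hc.2.1) ?_)).1
    have := hkeep _ hc.2.2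
    rwa [show i + 2 + 1 = i + 3 by ring, show i + 2 = i + 1 + 1 by ring] at this
  obtain ⟨r, hr, hDr⟩ := exists_residue_of_window (by omega) D hD hwin
  refine ⟨r, hr, fun n hn => (hmemD _).1 ((hDr n).2 hn), fun op hop => ?_⟩
  obtain ⟨u, v, rfl⟩ := hdel op hop
  obtain ⟨i, hi⟩ := (C.adj u v).1 (hadj u v hop)
  have hi' : IsDelAt q i (Op.del u v) := by
    rcases hi with ⟨rfl, rfl⟩ | ⟨rfl, rfl⟩
    · exact Or.inl rfl
    · exact Or.inr rfl
  have hval : ((i.val : ℕ) : ZMod (6 * k)) = i := ZMod.natCast_zmod_val i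
  refine ⟨i.val, ZMod.val_lt i, (hDr _).1 ?_, ?_⟩
  · rw [hval]
    exact (hmemD i).2 ⟨_, hop, hi'⟩
  · rwa [hval]

/-- Two steps of a walk in a cycle either return to the start or go on in the same direction. -/
theorem IsCyclicEnum.exists_index_of_adj {m : ℕ} {G : BGraph} {q : ZMod m → ℕ}
    (C : IsCyclicEnum G q) {a b c : ℕ} (hab : G.Adj a b) (hbc : G.Adj b c) :
    a = c ∨ ∃ i, b = q (i + 1) ∧ ((a = q i ∧ c = q (i + 2)) ∨ (c = q i ∧ a = q (i + 2))) := by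
  obtain ⟨i, hi⟩ := (C.adj _ _).1 hab
  obtain ⟨j, hj⟩ := (C.adj _ _).1 hbc
  rcases hi with ⟨rfl, rfl⟩ | ⟨rfl, rfl⟩ <;> rcases hj with ⟨h, rfl⟩ | ⟨rfl, h⟩ <;>
    have h := C.inj h
  · subst h
    exact Or.inr ⟨i, rfl, Or.inl ⟨rfl, by ring_nf⟩⟩
  · left
    rw [add_right_cancel h]
  · subst h
    exact Or.inl rfl
  · subst h
    exact Or.inr ⟨j, rfl, Or.inr ⟨rfl, by ring_nf⟩⟩

theorem IsCyclicEnum.isBicliqueUnion {m : ℕ} (hm : 6 < m) {G G' : BGraph} {q : ZMod m → ℕ}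
    (C : IsCyclicEnum G q) (hsub : ∀ x y, G'.Adj x y → G.Adj x y)
    (hwin : ∀ i, ¬ (G'.Adj (q i) (q (i + 1)) ∧ G'.Adj (q (i + 1)) (q (i + 2)) ∧
      G'.Adj (q (i + 2)) (q (i + 3)))) : IsBicliqueUnion G' := by
  intro a b c d hab hbc hcd
  rcases C.exists_index_of_adj (hsub _ _ hab) (hsub _ _ hbc) with rfl | ⟨i, hb, hi⟩
  · exact hcd
  rcases C.exists_index_of_adj (hsub _ _ hbc) (hsub _ _ hcd) with rfl | ⟨j, hc, hj⟩
  · exact hab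
  exfalso
  have h2 : (2 : ZMod m) ≠ 0 := by
    exact_mod_cast natCast_zmod_ne_zero (n := 2) (by omega) (by omega)
  rcases hi with ⟨ha, hc'⟩ | ⟨hc', ha⟩ <;> rcases hj with ⟨hb', hd⟩ | ⟨hd, hb'⟩ <;>
    have hij := C.inj (hb.symm.trans hb') <;> have hij' := C.inj (hc'.symm.trans hc)
  · refine hwin i ⟨ha ▸ hb ▸ hab, hb ▸ hc' ▸ hbc, ?_⟩
    rw [show i + 3 = j + 2 by linear_combination hij, ← hd, ← hc']
    exact hcd
  · exact h2 (by linear_combination hij' - hij)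
  · exact h2 (by linear_combination hij - hij')
  · refine hwin j ⟨hd ▸ hc ▸ G'.symm _ _ hcd, hc ▸ hb' ▸ G'.symm _ _ hbc, ?_⟩
    rw [show j + 3 = i + 2 by linear_combination - hij', ← ha, ← hb']
    exact G'.symm _ _ hab

theorem IsCyclicEnum.solves {k : ℕ} (hk : 2 ≤ k) {G : BGraph} {q : ZMod (6 * k) → ℕ}
    (C : IsCyclicEnum G q) {sA sB : Bool} {L : List Op} (hlen : L.length = 2 * k) {r : ℕ}
    (hr : r < 3) (hmem : ∀ n < 6 * k, n % 3 = r → ∃ op ∈ L, IsDelAt q n op)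
    (hL : ∀ op ∈ L, ∃ n < 6 * k, n % 3 = r ∧ IsDelAt q n op) : Solves sA sB L G := by
  classical
  have hm : 6 < 6 * k := by omega
  have : NeZero (6 * k) := ⟨by omega⟩
  choose! f hf _ hfL using hL
  have hindex : ∀ {a b}, a ∈ L → b ∈ L → IsDelAt q (f a) b → f a = f b := by
    intro a b ha hb hab
    have h := hab.index_unique hm C.inj (hfL b hb)
    rwa [ZMod.natCast_eq_natCast_iff', Nat.mod_eq_of_lt (hf a ha), Nat.mod_eq_of_lt (hf b hb)] at h
  have hnodup : (L.map f).Nodup := by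
    have hsub : (Finset.range (2 * k)).image (fun i => r + 3 * i) ⊆ (L.map f).toFinset := by
      intro n hn
      obtain ⟨i, hi, rfl⟩ := Finset.mem_image.1 hn
      rw [Finset.mem_range] at hi
      obtain ⟨op, hop, hdel⟩ := hmem (r + 3 * i) (by omega) (by omega)
      have h := hdel.index_unique hm C.inj (hfL op hop)
      rw [ZMod.natCast_eq_natCast_iff', Nat.mod_eq_of_lt (by omega),
        Nat.mod_eq_of_lt (hf op hop)] at h
      exact List.mem_toFinset.2 (List.mem_map.2 ⟨op, hop, h.symm⟩)
    have hcard := Finset.card_le_card hsub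
    rw [Finset.card_image_of_injective _ (fun a b h => by simpa using h), Finset.card_range,
      List.card_toFinset] at hcard
    have heq := (List.dedup_sublist (L.map f)).eq_of_length_le (by simpa [hlen] using hcard)
    exact List.dedup_eq_self.1 heq
  obtain ⟨G', hG'⟩ := exists_applySeq_del (sA := sA) (sB := sB) L G
    (fun op hop => by
      rcases hfL op hop with h | h
      · exact ⟨_, _, h, C.adj_succ _⟩
      · exact ⟨_, _, h, G.symm _ _ (C.adj_succ _)⟩)
    ((List.pairwise_map.1 hnodup).imp_of_mem fun {a b} ha hb hab u v hauv => by
      have hdel := hfL a ha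
      refine ⟨fun h => hab (hindex ha hb (by rwa [h, ← hauv])), fun h => hab (hindex ha hb ?_)⟩
      rw [h]
      simp only [IsDelAt, hauv, Op.del.injEq] at hdel ⊢
      tauto)
  obtain ⟨-, hadj⟩ := adj_of_applySeq_del L (fun op hop => by
      rcases hfL op hop with h | h <;> exact ⟨_, _, h⟩) hG'
  refine ⟨G', hG', C.isBicliqueUnion hm (fun x y h => ((hadj x y).1 h).1) fun i h => ?_⟩
  have hdead : ∀ n : ℕ, n % 3 = r → ¬ G'.Adj (q n) (q (n + 1)) := by
    intro n hn h
    have hcast : ((n % (6 * k) : ℕ) : ZMod (6 * k)) = n := ZMod.natCast_mod n _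
    obtain ⟨op, hop, hdel⟩ := hmem (n % (6 * k)) (Nat.mod_lt _ (by omega))
      (by rwa [Nat.mod_mod_of_dvd _ (Dvd.intro (2 * k) (by ring))])
    rw [hcast] at hdel
    have h' := ((hadj _ _).1 h).2
    rcases hdel with rfl | rfl
    · exact h'.1 hop
    · exact h'.2 hop
  have hval : ((i.val : ℕ) : ZMod (6 * k)) = i := ZMod.natCast_zmod_val i
  have hcases : i.val % 3 = r ∨ (i.val + 1) % 3 = r ∨ (i.val + 2) % 3 = r := by omega
  rcases hcases with h' | h' | h' <;> apply hdead _ h' <;> push_cast <;> rw [hval]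
  · exact h.1
  · rw [show i + 1 + 1 = i + 2 by ring]
    exact h.2.1
  · rw [show i + 2 + 1 = i + 3 by ring]
    exact h.2.2

theorem IsCycleWith.isCyclicEnum {m : ℕ} (hm : 0 < m) {G : BGraph} {p : ℕ → ℕ}
    (h : IsCycleWith G p m) : IsCyclicEnum G fun i : ZMod m => p i.val := by
  have : NeZero m := ⟨hm.ne'⟩
  obtain ⟨hinj, hA, hB, hadj⟩ := h
  refine ⟨fun i j hij => ZMod.val_injective m (hinj _ _ i.val_lt j.val_lt hij), fun i => ?_,
    fun x y => ?_⟩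
  · rcases Nat.mod_two_eq_zero_or_one i.val with h | h
    · left
      rw [hA]
      exact ⟨_, ⟨i.val_lt, h⟩, rfl⟩
    · right
      rw [hB]
      exact ⟨_, ⟨i.val_lt, h⟩, rfl⟩
  · rw [hadj]
    have hsucc : ∀ n : ℕ, ((n : ZMod m) + 1).val = (n + 1) % m := fun n => by
      rw [← ZMod.val_natCast]
      push_cast
      rfl
    constructor
    · rintro ⟨n, hn, h⟩
      refine ⟨n, ?_⟩
      rwa [hsucc, ZMod.val_natCast_of_lt hn]
    · rintro ⟨i, h⟩
      refine ⟨i.val, i.val_lt, ?_⟩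
      rwa [← hsucc, ZMod.natCast_zmod_val]

/-- For `k ≥ 2`, the sequences of exactly `2k` operations
transforming `C_{6k}` (with consecutive vertices `p 0, …, p (6k-1)`, `p i`
being the paper's `v_{i+1}`) into a disjoint union of bicliques are exactly
the three sequences of edge deletions: for some `r ∈ {0, 1, 2}`, delete the
edges `v_{1+3i+r} v_{2+3i+r} = p ((r+3i) % 6k) p ((r+3i+1) % 6k)` for every
`0 ≤ i ≤ 2k - 1`. -/
theorem cycle_solutions (k : ℕ) (hk : 2 ≤ k) (G : BGraph) (p : ℕ → ℕ)
    (hcyc : IsCycleWith G p (6 * k)) (L : List Op) (hlen : L.length = 2 * k) :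
    Solves true true L G ↔
      ∃ r < 3,
        (∀ i < 2 * k,
          Op.del (p ((r + 3 * i) % (6 * k))) (p ((r + 3 * i + 1) % (6 * k))) ∈ L ∨
          Op.del (p ((r + 3 * i + 1) % (6 * k))) (p ((r + 3 * i) % (6 * k))) ∈ L) ∧
        (∀ op ∈ L, ∃ i < 2 * k,
          op = Op.del (p ((r + 3 * i) % (6 * k))) (p ((r + 3 * i + 1) % (6 * k))) ∨
          op = Op.del (p ((r + 3 * i + 1) % (6 * k))) (p ((r + 3 * i) % (6 * k)))) := by
  have : NeZero (6 * k) := ⟨by omega⟩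
  have C := hcyc.isCyclicEnum (by omega)
  set q : ZMod (6 * k) → ℕ := fun i => p i.val with hq
  have hp : ∀ n : ℕ, p (n % (6 * k)) = q n := fun n => by
    simp only [hq, ZMod.val_natCast]
  have hp_succ : ∀ n : ℕ, p ((n + 1) % (6 * k)) = q (n + 1) := fun n => by
    rw [hp, Nat.cast_add_one]
  simp only [hp_succ]
  simp only [hp]
  constructor
  · intro h
    obtain ⟨r, hr, hmem, hL⟩ := C.exists_residue hk hlen h
    refine ⟨r, hr, fun i _ => ?_, fun op hop => ?_⟩
    · obtain ⟨op, hop, rfl | rfl⟩ := hmem (r + 3 * i) (by omega)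
      · exact Or.inl hop
      · exact Or.inr hop
    · obtain ⟨n, hn, hnr, hdel⟩ := hL op hop
      refine ⟨n / 3, by omega, ?_⟩
      rwa [show r + 3 * (n / 3) = n by omega]
  · rintro ⟨r, hr, hmem, hL⟩
    refine C.solves hk hlen hr (fun n hn hnr => ?_) fun op hop => ?_
    · rw [show n = r + 3 * (n / 3) by omega]
      rcases hmem (n / 3) (by omega) with h | h
      · exact ⟨_, h, Or.inl rfl⟩
      · exact ⟨_, h, Or.inr rfl⟩
    · obtain ⟨i, hi, h⟩ := hL op hop
      exact ⟨r + 3 * i, by omega, by omega, h⟩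

end BCE
end

section
/- Let k ≥ 1 and let v_1, …, v_{6k} be the consecutive vertices of a cycle of length 6k (indices modulo 6k). Let i_1 < i_2 < … < i_b be indices in {1, …, 6k} such that for every j the cyclic difference i_{j+1} − i_j is congruent to 0 or 2 modulo 6, and delete from the cycle, for each j, the two cycle edges incident to v_{i_j}. Then the resulting graph, a disjoint union of paths, requires at least 2k − b edge editions and vertex splittings to be transformed into a disjoint union of bicliques. -/
namespace BCE

/-- Vertices of `H` carry labels `φ`. The label sequence `l 0, l 1, l 2, l 3` is obstructed in `H`
if it is spelled by a walk of `H` while no edge of `H` joins the labels `l 0` and `l 3`. -/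
structure Obstructed (H : BGraph) (φ : ℕ → ℕ) (l : ℕ → ℕ) : Prop where
  walk : ∃ x y z t, H.Adj x y ∧ H.Adj y z ∧ H.Adj z t ∧
    φ x = l 0 ∧ φ y = l 1 ∧ φ z = l 2 ∧ φ t = l 3
  noChord : ∀ x y, H.Adj x y → s(l 0, l 3) ≠ s(φ x, φ y)

/-- The label sequence `l 0, …, l 3` uses the edge `e`. -/
def UsesEdge (e : Sym2 ℕ) (l : ℕ → ℕ) : Prop := ∃ i < 3, s(l i, l (i + 1)) = e

/-- The label `x` is an inner label of the sequence `l 0, …, l 3`. -/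
def IsInner (x : ℕ) (l : ℕ → ℕ) : Prop := l 1 = x ∨ l 2 = x

/-- The ends of the label sequence `l 0, …, l 3` form the pair `e`. -/
def HasEnds (e : Sym2 ℕ) (l : ℕ → ℕ) : Prop := s(l 0, l 3) = e

/-- The sets of label sequences whose obstructions may be removed by one operation. -/
def IsKillSet (K : (ℕ → ℕ) → Prop) : Prop :=
  (∃ e, K = UsesEdge e) ∨ (∃ x, K = IsInner x) ∨ (∃ e, K = HasEnds e)

/-- Every edge of `H` has its ends among the vertices of `H`. -/
def EdgesInVerts (H : BGraph) : Prop := ∀ x y, H.Adj x y → x ∈ verts H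

theorem Obstructed.not_isBicliqueUnion {H : BGraph} {φ l : ℕ → ℕ} (h : Obstructed H φ l) :
    ¬ IsBicliqueUnion H := by
  obtain ⟨x, y, z, t, hxy, hyz, hzt, h0, -, -, h3⟩ := h.walk
  intro hb
  exact h.noChord x t (hb x y z t hxy hyz hzt) (by rw [h0, h3])

theorem OpStep.edgesInVerts {sA sB : Bool} {op : Op} {H H' : BGraph} (hs : OpStep sA sB op H H')
    (hv : EdgesInVerts H) : EdgesInVerts H' := by
  intro x y hxy
  cases hs with
  | del h hA hB hadj =>
    have := hv x y ((hadj x y).1 hxy).1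
    simpa [verts, hA, hB] using this
  | @add _ _ u v hu hv' h hA hB hadj =>
    rcases (hadj x y).1 hxy with h1 | ⟨rfl, rfl⟩ | ⟨rfl, rfl⟩
    · simpa [verts, hA, hB] using hv x y h1
    · simp [verts, hA, hu]
    · simp [verts, hB, hv']
  | @split _ _ v v' N1 N2 hside hfresh hcover hA hB hadj =>
    have hsub : ∀ z, z ∈ verts H ∨ z = v' → z ∈ verts H' := by
      intro z hz
      rcases hside with ⟨h1, -⟩ | ⟨h1, -⟩
      · simp only [verts, hA h1, Set.mem_union, Set.mem_insert_iff] at hz ⊢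
        tauto
      · simp only [verts, hB h1, Set.mem_union, Set.mem_insert_iff] at hz ⊢
        tauto
    have hN : ∀ z, z ∈ N1 ∪ N2 → H.Adj v z := fun z hz => by
      rw [hcover] at hz; exact hz
    apply hsub
    rcases (hadj x y).1 hxy with ⟨h1, -⟩ | ⟨rfl, h1⟩ | ⟨rfl, h1⟩ | ⟨rfl, -⟩ | ⟨rfl, h1⟩
    · exact Or.inl (hv x y h1)
    · exact Or.inl (hv _ _ (hN _ (Or.inl h1)))
    · exact Or.inl (hv _ _ (H.symm _ _ (hN _ (Or.inl h1))))
    · exact Or.inr rfl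
    · exact Or.inl (hv _ _ (H.symm _ _ (hN _ (Or.inr h1))))

/-- After suitable relabelling, one operation removes only obstructions in a single kill set. -/
theorem OpStep.exists_killSet {sA sB : Bool} {op : Op} {H H' : BGraph}
    (hs : OpStep sA sB op H H') (hv : EdgesInVerts H) (φ : ℕ → ℕ) :
    ∃ (φ' : ℕ → ℕ) (K : (ℕ → ℕ) → Prop), IsKillSet K ∧
      ∀ l, Obstructed H φ l → ¬ K l → Obstructed H' φ' l := by
  cases hs with
  | @del _ _ u v h hA hB hadj =>
    refine ⟨φ, UsesEdge s(φ u, φ v), Or.inl ⟨_, rfl⟩, fun l hl hK => ⟨?_, ?_⟩⟩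
    · obtain ⟨x, y, z, t, hxy, hyz, hzt, h0, h1, h2, h3⟩ := hl.walk
      have keep : ∀ i < 3, ∀ a b, H.Adj a b → φ a = l i → φ b = l (i + 1) → H'.Adj a b := by
        intro i hi a b hab ha hb
        refine (hadj a b).2 ⟨hab, fun hc => hK ⟨i, hi, ?_⟩⟩
        rw [← ha, ← hb]
        rcases hc with ⟨rfl, rfl⟩ | ⟨rfl, rfl⟩
        · rfl
        · exact Sym2.eq_swap
      exact ⟨x, y, z, t, keep 0 (by omega) _ _ hxy h0 h1, keep 1 (by omega) _ _ hyz h1 h2,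
        keep 2 (by omega) _ _ hzt h2 h3, h0, h1, h2, h3⟩
    · exact fun x y hxy => hl.noChord x y ((hadj x y).1 hxy).1
  | @add _ _ u v hu hv' h hA hB hadj =>
    refine ⟨φ, HasEnds s(φ u, φ v), Or.inr (Or.inr ⟨_, rfl⟩), fun l hl hK => ⟨?_, ?_⟩⟩
    · obtain ⟨x, y, z, t, hxy, hyz, hzt, hlab⟩ := hl.walk
      exact ⟨x, y, z, t, (hadj _ _).2 (Or.inl hxy), (hadj _ _).2 (Or.inl hyz),
        (hadj _ _).2 (Or.inl hzt), hlab⟩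
    · intro x y hxy
      rcases (hadj x y).1 hxy with h1 | ⟨rfl, rfl⟩ | ⟨rfl, rfl⟩
      · exact hl.noChord x y h1
      · exact hK
      · rw [Sym2.eq_swap (a := φ x)]
        exact hK
  | @split _ _ v v' N1 N2 hside hfresh hcover hA hB hadj =>
    have hN : ∀ z, z ∈ N1 ∪ N2 ↔ H.Adj v z := fun z => by rw [hcover]; rfl
    have hne : ∀ x y, H.Adj x y → x ≠ v' := fun x y hxy hx => hfresh (hx ▸ hv x y hxy)
    have hne' : ∀ x y, H.Adj x y → y ≠ v' := fun x y hxy => hne y x (H.symm _ _ hxy)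
    refine ⟨fun x => if x = v' then φ v else φ x, IsInner (φ v), Or.inr (Or.inl ⟨_, rfl⟩),
      fun l hl hK => ⟨?_, ?_⟩⟩
    · obtain ⟨x, y, z, t, hxy, hyz, hzt, h0, h1, h2, h3⟩ := hl.walk
      have hy : y ≠ v := by rintro rfl; exact hK (Or.inl h1.symm)
      have hz : z ≠ v := by rintro rfl; exact hK (Or.inr h2.symm)
      have lift : ∀ a b, H.Adj a b → b ≠ v →
          ∃ a', H'.Adj a' b ∧ (if a' = v' then φ v else φ a') = φ a := by
        intro a b hab hb
        by_cases ha : a = v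
        · subst ha
          rcases (hN b).2 hab with hb1 | hb2
          · exact ⟨a, (hadj _ _).2 (Or.inr (Or.inl ⟨rfl, hb1⟩)), by simp⟩
          · exact ⟨v', (hadj _ _).2 (by simp [hb2]), by simp⟩
        · exact ⟨a, (hadj _ _).2 (Or.inl ⟨hab, ha, hb⟩), by simp [hne a b hab]⟩
      obtain ⟨x', hx', hx0⟩ := lift x y hxy hy
      obtain ⟨t', ht', ht0⟩ := lift t z (H.symm _ _ hzt) hz
      refine ⟨x', y, z, t', hx', (hadj _ _).2 (Or.inl ⟨hyz, hy, hz⟩), H'.symm _ _ ht',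
        hx0.trans h0, ?_, ?_, ht0.trans h3⟩
      · simp [hne y z hyz, h1]
      · simp [hne z t hzt, h2]
    · intro x y hxy
      have key : ∃ x₀ y₀, H.Adj x₀ y₀ ∧ (if x = v' then φ v else φ x) = φ x₀ ∧
          (if y = v' then φ v else φ y) = φ y₀ := by
        rcases (hadj x y).1 hxy with ⟨h1, -⟩ | ⟨rfl, h1⟩ | ⟨rfl, h1⟩ | ⟨rfl, h1⟩ | ⟨rfl, h1⟩
        · exact ⟨x, y, h1, by simp [hne _ _ h1], by simp [hne' _ _ h1]⟩
        · have h2 := (hN _).1 (Or.inl h1)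
          exact ⟨x, y, h2, by simp, by simp [hne' _ _ h2]⟩
        · have h2 := (hN _).1 (Or.inl h1)
          exact ⟨x, y, H.symm _ _ h2, by simp [hne' _ _ h2], by simp⟩
        · have h2 := (hN _).1 (Or.inr h1)
          exact ⟨v, y, h2, by simp, by simp [hne' _ _ h2]⟩
        · have h2 := (hN _).1 (Or.inr h1)
          exact ⟨x, v, H.symm _ _ h2, by simp [hne' _ _ h2], by simp⟩
      obtain ⟨x₀, y₀, h1, hx, hy⟩ := key
      simp only [hx, hy]
      exact hl.noChord x₀ y₀ h1

open Classical in
/-- If every kill set contains at most `c` of the obstructed sequences, then at least a `1 / c`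
fraction as many operations is needed as there are obstructed sequences. -/
theorem card_le_mul_length {ι : Type*} (l : ι → ℕ → ℕ) (c : ℕ) (L : List Op) :
    ∀ (H H' : BGraph) (φ : ℕ → ℕ) (F : Finset ι), EdgesInVerts H →
      (∀ w ∈ F, Obstructed H φ (l w)) →
      (∀ K, IsKillSet K → (F.filter fun w => K (l w)).card ≤ c) →
      ApplySeq true true L H H' → IsBicliqueUnion H' → F.card ≤ c * L.length := by
  induction L with
  | nil =>
    intro H H' φ F hv hobs hK happ hbic
    obtain rfl : H' = H := happ
    have : F = ∅ := Finset.eq_empty_of_forall_notMem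
      fun w hw => (hobs w hw).not_isBicliqueUnion hbic
    simp [this]
  | cons op L ih =>
    intro H H' φ F hv hobs hK happ hbic
    obtain ⟨H₁, hstep, hrest⟩ := happ
    obtain ⟨φ', K, hKill, hsurv⟩ := hstep.exists_killSet hv φ
    have h1 := ih H₁ H' φ' (F.filter fun w => ¬ K (l w)) (hstep.edgesInVerts hv)
      (fun w hw => hsurv _ (hobs w (Finset.mem_filter.1 hw).1) (Finset.mem_filter.1 hw).2)
      (fun K' hK' => (Finset.card_le_card
        (Finset.filter_subset_filter _ (Finset.filter_subset _ _))).trans (hK K' hK'))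
      hrest hbic
    have h2 := hK K hKill
    have h3 := Finset.card_filter_add_card_filter_not (s := F) (fun w => K (l w))
    rw [List.length_cons, Nat.mul_succ]
    omega

theorem mod_eq_mod_cases {m x y : ℕ} (h : x % m = y % m) (hx : x < y + 2 * m)
    (hy : y < x + 2 * m) : x = y ∨ x = y + m ∨ y = x + m := by
  rcases le_total x y with hxy | hxy
  · obtain ⟨c, hc⟩ := (Nat.modEq_iff_dvd' hxy).1 h
    have : c < 2 := by
      by_contra hc2
      have := Nat.mul_le_mul_left m (not_lt.1 hc2)
      omega
    interval_cases c <;> omega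
  · obtain ⟨c, hc⟩ := (Nat.modEq_iff_dvd' hxy).1 h.symm
    have : c < 2 := by
      by_contra hc2
      have := Nat.mul_le_mul_left m (not_lt.1 hc2)
      omega
    interval_cases c <;> omega

section Cycle

variable {G : BGraph} {p : ℕ → ℕ} {m : ℕ}

theorem IsCycleWith.mod_inj (h : IsCycleWith G p m) (hm : 0 < m) {x y : ℕ}
    (hxy : p (x % m) = p (y % m)) : x % m = y % m :=
  h.1 _ _ (Nat.mod_lt _ hm) (Nat.mod_lt _ hm) hxy

theorem IsCycleWith.adj_succ (h : IsCycleWith G p m) (hm : 0 < m) (x : ℕ) :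
    G.Adj (p (x % m)) (p ((x + 1) % m)) :=
  (h.2.2.2 _ _).2 ⟨x % m, Nat.mod_lt _ hm, Or.inl ⟨rfl, by simp⟩⟩

theorem IsCycleWith.edgesInVerts (h : IsCycleWith G p m) : EdgesInVerts G := by
  have hmem : ∀ i < m, p i ∈ verts G := by
    intro i hi
    rcases Nat.mod_two_eq_zero_or_one i with h0 | h1
    · exact Or.inl (h.2.1 ▸ ⟨i, ⟨hi, h0⟩, rfl⟩)
    · exact Or.inr (h.2.2.1 ▸ ⟨i, ⟨hi, h1⟩, rfl⟩)
  intro x y hxy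
  obtain ⟨i, hi, ⟨rfl, -⟩ | ⟨-, rfl⟩⟩ := (h.2.2.2 x y).1 hxy
  · exact hmem i hi
  · exact hmem _ (Nat.mod_lt _ (by omega))

theorem IsCycleWith.not_adj_add_three (h : IsCycleWith G p m) (hm : 6 ≤ m) (s : ℕ) :
    ¬ G.Adj (p (s % m)) (p ((s + 3) % m)) := by
  have hm0 : 0 < m := by omega
  intro hadj
  have hs := Nat.mod_lt s hm0
  obtain ⟨i, hi, ⟨h1, h2⟩ | ⟨h1, h2⟩⟩ := (h.2.2.2 _ _).1 hadj
  · have e1 := h.1 _ _ hs hi h1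
    have e2 := h.mod_inj hm0 h2
    rw [← e1, Nat.mod_add_mod] at e2
    have := mod_eq_mod_cases e2 (by omega) (by omega)
    omega
  · have e1 := h.1 _ _ (Nat.mod_lt _ hm0) hi h1
    have e2 := h.mod_inj hm0 h2
    rw [← e1, Nat.mod_add_mod] at e2
    have := mod_eq_mod_cases e2 (by omega) (by omega)
    omega

/-- Four consecutive cycle vertices whose three edges survive in a subgraph are obstructed. -/
theorem IsCycleWith.obstructed (h : IsCycleWith G p m) (hm : 6 ≤ m) {G' : BGraph}
    (hle : ∀ x y, G'.Adj x y → G.Adj x y) (s : ℕ)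
    (hs : ∀ i < 3, G'.Adj (p ((s + i) % m)) (p ((s + i + 1) % m))) :
    Obstructed G' id (fun i => p ((s + i) % m)) := by
  refine ⟨⟨_, _, _, _, hs 0 (by omega), hs 1 (by omega), hs 2 (by omega), rfl, rfl, rfl, rfl⟩, ?_⟩
  intro x y hxy heq
  have hn := h.not_adj_add_three hm s
  rcases Sym2.eq_iff.1 heq with ⟨h1, h2⟩ | ⟨h1, h2⟩
  · simp only [id, Nat.add_zero] at h1 h2
    exact hn (h1 ▸ h2 ▸ hle x y hxy)
  · simp only [id, Nat.add_zero] at h1 h2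
    exact hn (h1 ▸ h2 ▸ G.symm _ _ (hle x y hxy))

open Classical in
/-- Among all windows of four consecutive cycle vertices, a kill set contains at most three. -/
theorem IsCycleWith.card_killed_le_three (h : IsCycleWith G p m) (hm : 6 ≤ m)
    (K : (ℕ → ℕ) → Prop) (hK : IsKillSet K) :
    ((Finset.range m).filter fun s => K fun i => p ((s + i) % m)).card ≤ 3 := by
  have hm0 : 0 < m := by omega
  have inj : ∀ {x y}, p (x % m) = p (y % m) → x < y + 2 * m → y < x + 2 * m →
      x = y ∨ x = y + m ∨ y = x + m := fun hxy h1 h2 =>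
    mod_eq_mod_cases (h.mod_inj hm0 hxy) h1 h2
  have vertexCard : ∀ x, ∀ i < 6,
      ((Finset.range m).filter fun s => p ((s + i) % m) = x).card ≤ 1 := by
    intro x i hi
    refine Finset.card_le_one.2 fun s hs t ht => ?_
    simp only [Finset.mem_filter, Finset.mem_range] at hs ht
    have := inj (hs.2.trans ht.2.symm) (by omega) (by omega)
    omega
  rcases hK with ⟨e, rfl⟩ | ⟨x, rfl⟩ | ⟨e, rfl⟩
  · have edgeCard : ∀ i < 3, ((Finset.range m).filter fun s =>
        s(p ((s + i) % m), p ((s + (i + 1)) % m)) = e).card ≤ 1 := by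
      intro i hi
      refine Finset.card_le_one.2 fun s hs t ht => ?_
      simp only [Finset.mem_filter, Finset.mem_range] at hs ht
      rcases Sym2.eq_iff.1 (hs.2.trans ht.2.symm) with ⟨h1, h2⟩ | ⟨h1, h2⟩
      · have := inj h1 (by omega) (by omega)
        omega
      · have := inj h1 (by omega) (by omega)
        have := inj h2 (by omega) (by omega)
        omega
    have hsub : ((Finset.range m).filter fun s => UsesEdge e fun i => p ((s + i) % m)) ⊆
        (Finset.range 3).biUnion fun i => (Finset.range m).filter fun s =>
          s(p ((s + i) % m), p ((s + (i + 1)) % m)) = e := by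
      intro s hs
      obtain ⟨hs, i, hi, he⟩ := Finset.mem_filter.1 hs
      exact Finset.mem_biUnion.2 ⟨i, Finset.mem_range.2 hi, Finset.mem_filter.2 ⟨hs, he⟩⟩
    refine (Finset.card_le_card hsub).trans ((Finset.card_biUnion_le_card_mul _ _ 1
      fun i hi => edgeCard i (Finset.mem_range.1 hi)).trans (by simp))
  · have hsub : ((Finset.range m).filter fun s => IsInner x fun i => p ((s + i) % m)) ⊆
        ((Finset.range m).filter fun s => p ((s + 1) % m) = x) ∪
          ((Finset.range m).filter fun s => p ((s + 2) % m) = x) := by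
      intro s hs
      obtain ⟨hs, h1 | h1⟩ := Finset.mem_filter.1 hs
      · exact Finset.mem_union_left _ (Finset.mem_filter.2 ⟨hs, h1⟩)
      · exact Finset.mem_union_right _ (Finset.mem_filter.2 ⟨hs, h1⟩)
    have h1 := vertexCard x 1 (by omega)
    have h2 := vertexCard x 2 (by omega)
    exact (Finset.card_le_card hsub).trans ((Finset.card_union_le _ _).trans (by omega))
  · induction e with | _ x y =>
    have hsub : ((Finset.range m).filter fun s => HasEnds s(x, y) fun i => p ((s + i) % m)) ⊆
        ((Finset.range m).filter fun s => p ((s + 0) % m) = x) ∪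
          ((Finset.range m).filter fun s => p ((s + 0) % m) = y) := by
      intro s hs
      obtain ⟨hs, he⟩ := Finset.mem_filter.1 hs
      rcases Sym2.eq_iff.1 he with h1 | h1
      · exact Finset.mem_union_left _ (Finset.mem_filter.2 ⟨hs, h1.1⟩)
      · exact Finset.mem_union_right _ (Finset.mem_filter.2 ⟨hs, h1.1⟩)
    have h1 := vertexCard x 0 (by omega)
    have h2 := vertexCard y 0 (by omega)
    exact (Finset.card_le_card hsub).trans ((Finset.card_union_le _ _).trans (by omega))

open Classical in
/-- Among edge-disjoint windows of four consecutive vertices of a proper subpath of the cycle, a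
kill set contains at most one. -/
theorem IsCycleWith.card_killed_le_one (h : IsCycleWith G p m) (hm : 0 < m) {ι : Type*}
    (F : Finset ι) (s : ι → ℕ) (n : ℕ) (hlo : ∀ w ∈ F, n ≤ s w) (hhi : ∀ w ∈ F, s w + 3 < n + m)
    (hdisj : ∀ w ∈ F, ∀ w' ∈ F, w ≠ w' → s w + 3 ≤ s w' ∨ s w' + 3 ≤ s w)
    (K : (ℕ → ℕ) → Prop) (hK : IsKillSet K) :
    (F.filter fun w => K fun i => p ((s w + i) % m)).card ≤ 1 := by
  refine Finset.card_le_one.2 fun w hw w' hw' => ?_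
  obtain ⟨hwF, hwK⟩ := Finset.mem_filter.1 hw
  obtain ⟨hwF', hwK'⟩ := Finset.mem_filter.1 hw'
  by_contra hne
  have hd := hdisj w hwF w' hwF' hne
  have h1 := hlo w hwF
  have h2 := hlo w' hwF'
  have h3 := hhi w hwF
  have h4 := hhi w' hwF'
  have inj : ∀ {x y}, p (x % m) = p (y % m) → n ≤ x → n ≤ y → x < n + m → y < n + m →
      x = y := fun hxy a b c d => by
    have := mod_eq_mod_cases (h.mod_inj hm hxy) (by omega) (by omega)
    omega
  rcases hK with ⟨e, rfl⟩ | ⟨x, rfl⟩ | ⟨e, rfl⟩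
  · obtain ⟨i, hi, he⟩ := hwK
    obtain ⟨j, hj, he'⟩ := hwK'
    rcases Sym2.eq_iff.1 (he.trans he'.symm) with ⟨a, b⟩ | ⟨a, b⟩
    · have := inj a (by omega) (by omega) (by omega) (by omega)
      omega
    · have := inj a (by omega) (by omega) (by omega) (by omega)
      have := inj b (by omega) (by omega) (by omega) (by omega)
      omega
  · rcases hwK with a | a <;> rcases hwK' with b | b <;>
    · have := inj (a.trans b.symm) (by omega) (by omega) (by omega) (by omega)
      omega
  · rcases Sym2.eq_iff.1 (Eq.trans hwK (Eq.symm hwK')) with ⟨a, b⟩ | ⟨a, b⟩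
    · have := inj a (by omega) (by omega) (by omega) (by omega)
      omega
    · have := inj a (by omega) (by omega) (by omega) (by omega)
      have := inj b (by omega) (by omega) (by omega) (by omega)
      omega

end Cycle

/-- Let `k ≥ 1` and let `v_1, …, v_{6k}` be the consecutive
vertices of a cycle of length `6k` (here `p i` is the paper's `v_{i+1}`,
indices modulo `6k`).  Let `idx 1 < … < idx b` be indices of vertices such
that all cyclic differences are congruent to `0` or `2` modulo `6`, and let
`G'` be obtained from the cycle by deleting, for each `j`, the two cycle
edges incident to the vertex `p (idx j)`.  Then transforming `G'` into a
disjoint union of bicliques requires at least `2k - b` operations. -/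
theorem path_union_lower_bound (k b : ℕ) (hk : 1 ≤ k) (G G' : BGraph)
    (p : ℕ → ℕ) (hcyc : IsCycleWith G p (6 * k)) (idx : ℕ → ℕ)
    (hmono : ∀ i j, 1 ≤ i → i < j → j ≤ b → idx i < idx j)
    (hrange : ∀ j, 1 ≤ j → j ≤ b → idx j < 6 * k)
    (hwrap : 1 ≤ b → idx (b + 1) = idx 1 + 6 * k)
    (hdiff : ∀ j, 1 ≤ j → j ≤ b →
      (idx (j + 1) - idx j) % 6 = 0 ∨ (idx (j + 1) - idx j) % 6 = 2)
    (hA : G'.A = G.A) (hB : G'.B = G.B)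
    (hadj : ∀ x y, G'.Adj x y ↔
      (G.Adj x y ∧ ∀ j, 1 ≤ j → j ≤ b → x ≠ p (idx j) ∧ y ≠ p (idx j)))
    (L : List Op) (G'' : BGraph)
    (happ : ApplySeq true true L G' G'') (hbic : IsBicliqueUnion G'') :
    2 * k - b ≤ L.length := by
  classical
  have hle : ∀ x y, G'.Adj x y → G.Adj x y := fun x y h => ((hadj x y).1 h).1
  have hv : EdgesInVerts G' := fun x y h => by
    have := hcyc.edgesInVerts x y (hle x y h)
    simpa [verts, hA, hB] using this
  have hm0 : 0 < 6 * k := by omega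
  rcases Nat.eq_zero_or_pos b with rfl | hb
  · have := card_le_mul_length (fun s i => p ((s + i) % (6 * k))) 3 L G' G'' id
      (Finset.range (6 * k)) hv
      (fun s _ => hcyc.obstructed (by omega) hle s fun i _ =>
        (hadj _ _).2 ⟨hcyc.adj_succ hm0 _, fun j h1 h2 => by omega⟩)
      (hcyc.card_killed_le_three (by omega)) happ hbic
    rw [Finset.card_range] at this
    omega
  · have hwrap := hwrap hb
    have hstrict : ∀ i j, 1 ≤ i → i < j → j ≤ b + 1 → idx i < idx j := by
      intro i j hi hij hj
      rcases Nat.lt_or_ge b j with h | h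
      · obtain rfl : j = b + 1 := by omega
        have := hrange i hi (by omega)
        omega
      · exact hmono i j hi hij h
    have hweak : ∀ i j, 1 ≤ i → i ≤ j → j ≤ b + 1 → idx i ≤ idx j := by
      intro i j hi hij hj
      rcases hij.eq_or_lt with rfl | h
      · exact le_rfl
      · exact (hstrict i j hi h hj).le
    set F : Finset (Σ _ : ℕ, ℕ) :=
      (Finset.Icc 1 b).sigma fun j => Finset.range ((idx (j + 1) - idx j - 2) / 3) with hF
    have hwin : ∀ w ∈ F, 1 ≤ w.1 ∧ w.1 ≤ b ∧ idx w.1 + 1 + 3 * w.2 + 3 < idx (w.1 + 1) := by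
      intro w hw
      simp only [hF, Finset.mem_sigma, Finset.mem_Icc, Finset.mem_range] at hw
      omega
    have hcard : 6 * k ≤ 3 * F.card + 3 * b := by
      have hgap : ∀ j ∈ Finset.Icc 1 b,
          idx (j + 1) - idx j ≤ 3 * ((idx (j + 1) - idx j - 2) / 3) + 3 := by
        intro j hj
        have hj := Finset.mem_Icc.1 hj
        have := hdiff j hj.1 hj.2
        have := hstrict j (j + 1) hj.1 (by omega) (by omega)
        omega
      have htel : ∀ n ≤ b, idx 1 + ∑ j ∈ Finset.Icc 1 n, (idx (j + 1) - idx j) = idx (n + 1) := by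
        intro n
        induction n with
        | zero => simp
        | succ n ih =>
          intro hn
          rw [Finset.sum_Icc_succ_top (by omega), ← Nat.add_assoc, ih (by omega)]
          have := hweak (n + 1) (n + 1 + 1) (by omega) (by omega) (by omega)
          omega
      have hsum := Finset.sum_le_sum hgap
      have := htel b le_rfl
      rw [Finset.sum_add_distrib, ← Finset.mul_sum] at hsum
      simp only [hF, Finset.card_sigma, Finset.card_range]
      simp only [Finset.sum_const, Nat.card_Icc, smul_eq_mul] at hsum
      omega
    have hbound : ∀ w ∈ F, idx 1 ≤ idx w.1 ∧ idx (w.1 + 1) ≤ idx 1 + 6 * k := by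
      intro w hw
      obtain ⟨h1, h2, -⟩ := hwin w hw
      have := hweak 1 w.1 le_rfl h1 (by omega)
      have := hweak (w.1 + 1) (b + 1) (by omega) (by omega) le_rfl
      omega
    have havoid : ∀ w ∈ F, ∀ i ≤ 3, ∀ j, 1 ≤ j → j ≤ b →
        p ((idx w.1 + 1 + 3 * w.2 + i) % (6 * k)) ≠ p (idx j) := by
      intro w hw i hi j hj1 hj2 heq
      obtain ⟨h1, h2, h3⟩ := hwin w hw
      have h4 := hbound w hw
      have h5 := hrange j hj1 hj2
      have h6 := hweak 1 j le_rfl hj1 (by omega)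
      rw [← Nat.mod_eq_of_lt h5] at heq
      have := mod_eq_mod_cases (hcyc.mod_inj hm0 heq) (by omega) (by omega)
      rcases Nat.lt_or_ge w.1 j with h | h
      · have := hweak (w.1 + 1) j (by omega) h (by omega)
        omega
      · have := hweak j w.1 hj1 h (by omega)
        omega
    have := card_le_mul_length
      (fun (w : Σ _ : ℕ, ℕ) i => p ((idx w.1 + 1 + 3 * w.2 + i) % (6 * k))) 1 L G' G'' id F hv
      (fun w hw => hcyc.obstructed (by omega) hle _ fun i hi =>
        (hadj _ _).2 ⟨hcyc.adj_succ hm0 _, fun j h1 h2 =>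
          ⟨havoid w hw i (by omega) j h1 h2, havoid w hw (i + 1) (by omega) j h1 h2⟩⟩)
      (hcyc.card_killed_le_one hm0 F (fun w => idx w.1 + 1 + 3 * w.2) (idx 1)
        (fun w hw => by have := hbound w hw; omega)
        (fun w hw => by have := hbound w hw; have := hwin w hw; omega)
        (by
          rintro ⟨j, t⟩ hw ⟨j', t'⟩ hw' hne
          have h1 := hwin _ hw
          have h2 := hwin _ hw'
          dsimp only at h1 h2 ⊢
          rcases Nat.lt_trichotomy j j' with h | rfl | h
          · have := hweak (j + 1) j' (by omega) h (by omega)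
            omega
          · have : t ≠ t' := by rintro rfl; exact hne rfl
            omega
          · have := hweak (j' + 1) j (by omega) h (by omega)
            omega))
      happ hbic
    omega

end BCE
end
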